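/- arXiv:1806.08885 — 4 statements merged into one kernel-verified Lean document; each statement's English description precedes it below -/
import Mathlib

section
/- For every integer r ≥ 2 there exists an integer N such that for every integer n ≥ N, the r-colour size-Ramsey number of the path on n vertices satisfies R̂(P_n, r) < 600 (log r) r² n. -/
open SimpleGraph

/-- `G → (F)_r` : every colouring of the edges of `G` with `r` colours yields a
monochromatic copy of `F`, i.e. an injective map preserving adjacency all of whose
edges receive the same colour. -/
def Arrows {V W : Type*} (G : SimpleGraph V) (F : SimpleGraph W) (r : ℕ) : Prop :=
  ∀ c : Sym2 V → Fin r, ∃ (k : Fin r) (f : W → V), Function.Injective f ∧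
    ∀ a b, F.Adj a b → G.Adj (f a) (f b) ∧ c s(f a, f b) = k

/-- The `r`-colour size-Ramsey number of `F`: the smallest number of edges of a
(finite) graph `G` satisfying `G → (F)_r`. -/
noncomputable def sizeRamsey {W : Type*} (F : SimpleGraph W) (r : ℕ) : ℕ :=
  sInf {m | ∃ (N : ℕ) (G : SimpleGraph (Fin N)), G.edgeSet.ncard = m ∧ Arrows G F r}

/-!
Put `6r²s` uniformly random ordered pairs (repetitions and loops allowed) on `6rn` vertices, with
`s` about `90 n log r`. A union bound shows that with positive probability no two `n`-sets `S`, `P`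
*capture* `s` of the pairs, where a pair is captured if it meets `S` and lies inside `S ∪ P`. On the
other hand, depth-first search in a graph without a path on `n` vertices finds an `n`-set `S` all
of whose neighbours outside `S` lie on the current search path, so that all edges meeting `S` are
captured by `S` and a set of `n` vertices covering this path. Peeling off such sets `6r` times
exhausts the vertices, so a colour class without the path has fewer than `6rs` pairs, and `r`
classes of this size cannot account for all pairs.
-/

open Finset

section Probability

variable {α κ ι : Type*} [Fintype α] [DecidableEq α] [Fintype κ]

theorem sum_two_pow_card_hits [DecidableEq κ] (B : Finset α) :
    ∑ f : κ → α, 2 ^ #{i | f i ∈ B} = (Fintype.card α + #B) ^ Fintype.card κ := by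
  calc ∑ f : κ → α, 2 ^ #{i | f i ∈ B} = ∑ f : κ → α, ∏ i, if f i ∈ B then 2 else 1 := by
        simp only [← prod_const, prod_filter]
    _ = ∏ _i : κ, ∑ x : α, if x ∈ B then 2 else 1 :=
        (Fintype.prod_sum fun _ x => if x ∈ B then 2 else 1).symm
    _ = ∏ _i : κ, ∑ x : α, (1 + if x ∈ B then 1 else 0) := by
        refine prod_congr rfl fun _ _ => sum_congr rfl fun x _ => ?_
        split_ifs <;> rfl
    _ = (Fintype.card α + #B) ^ Fintype.card κ := by
        simp [sum_add_distrib]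

/-- Markov's inequality for `2 ^ #hits` and a union bound over `I`. -/
theorem exists_forall_card_hits_lt (I : Finset ι) (B : ι → Finset α) {b s : ℕ}
    (hB : ∀ j ∈ I, #(B j) ≤ b)
    (h : #I * (Fintype.card α + b) ^ Fintype.card κ <
      2 ^ s * Fintype.card α ^ Fintype.card κ) :
    ∃ f : κ → α, ∀ j ∈ I, #{i | f i ∈ B j} < s := by
  classical
  by_contra! hhit
  refine h.not_ge ?_
  calc 2 ^ s * Fintype.card α ^ Fintype.card κ = ∑ _f : κ → α, 2 ^ s := by simp [mul_comm]
    _ ≤ ∑ f : κ → α, ∑ j ∈ I, 2 ^ #{i | f i ∈ B j} := by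
        refine sum_le_sum fun f _ => ?_
        obtain ⟨j, hj, hs⟩ := hhit f
        exact (Nat.pow_le_pow_right two_pos hs).trans
          (single_le_sum_of_canonicallyOrdered (f := fun j => 2 ^ #{i | f i ∈ B j}) hj)
    _ = ∑ j ∈ I, (Fintype.card α + #(B j)) ^ Fintype.card κ := by
        simp only [sum_comm (s := univ), sum_two_pow_card_hits]
    _ ≤ #I * (Fintype.card α + b) ^ Fintype.card κ := by
        rw [← smul_eq_mul]
        exact sum_le_card_nsmul _ _ _ fun j hj =>
          Nat.pow_le_pow_left (Nat.add_le_add_left (hB j hj) _) _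

end Probability

section DepthFirstSearch

variable {V : Type*} {H : SimpleGraph V} {U S : Finset V} {l : List V} {n : ℕ}

theorem pathGraph_isContained_of_isChain (hnodup : l.Nodup) (hchain : l.IsChain H.Adj) :
    pathGraph l.length ⊑ H := by
  rw [List.isChain_iff_getElem] at hchain
  refine ⟨⟨⟨l.get, fun {a b} hab => ?_⟩, List.nodup_iff_injective_get.mp hnodup⟩⟩
  obtain ⟨a, ha⟩ := a
  obtain ⟨b, hb⟩ := b
  obtain rfl | rfl : a + 1 = b ∨ b + 1 = a := pathGraph_adj.mp hab
  · exact hchain a hb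
  · exact (hchain b ha).symm

theorem length_lt_of_pathGraph_free (hH : (pathGraph n).Free H) (hnodup : l.Nodup)
    (hchain : l.IsChain H.Adj) : l.length < n := by
  by_contra! hle
  have hcopy := pathGraph_isContained_of_isChain (hnodup.sublist (l.take_sublist n))
    (hchain.take n)
  rw [List.length_take_of_le hle] at hcopy
  exact hH hcopy

variable [DecidableEq V]

/-- A state of depth-first search in the subgraph of `H` induced by `U`: the search has finished
with the vertices of `S`, and `l` is the current search path, listed from its active end. -/
structure DFSState (H : SimpleGraph V) (U S : Finset V) (l : List V) : Prop where
  subset : S ⊆ U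
  nodup : l.Nodup
  isChain : l.IsChain H.Adj
  mem_sdiff_of_mem : ∀ v ∈ l, v ∈ U \ S
  mem_of_adj : ∀ a ∈ S, ∀ b ∈ U, H.Adj a b → b ∈ S ∨ b ∈ l

theorem DFSState.init (H : SimpleGraph V) (U : Finset V) : DFSState H U ∅ [] where
  subset := empty_subset U
  nodup := List.nodup_nil
  isChain := List.isChain_nil
  mem_sdiff_of_mem := by simp
  mem_of_adj := by simp

theorem DFSState.push {w : V} (h : DFSState H U S l) (hw : w ∈ U \ S) (hwl : w ∉ l)
    (hchain : (w :: l).IsChain H.Adj) : DFSState H U S (w :: l) where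
  subset := h.subset
  nodup := List.nodup_cons.mpr ⟨hwl, h.nodup⟩
  isChain := hchain
  mem_sdiff_of_mem := List.forall_mem_cons.mpr ⟨hw, h.mem_sdiff_of_mem⟩
  mem_of_adj a ha b hb hab := (h.mem_of_adj a ha b hb hab).imp_right (List.mem_cons_of_mem w)

theorem DFSState.pop {v : V} (h : DFSState H U S (v :: l))
    (hv : ∀ b ∈ U, H.Adj v b → b ∈ S ∨ b ∈ v :: l) : DFSState H U (insert v S) l where
  subset := insert_subset (mem_sdiff.mp (h.mem_sdiff_of_mem v List.mem_cons_self)).1 h.subset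
  nodup := h.nodup.of_cons
  isChain := h.isChain.tail
  mem_sdiff_of_mem x hx := by
    have hxv : x ≠ v := fun e => (List.nodup_cons.mp h.nodup).1 (e ▸ hx)
    simpa [hxv] using h.mem_sdiff_of_mem x (List.mem_cons_of_mem v hx)
  mem_of_adj a ha b hb hab := by
    have hbvl : b ∈ S ∨ b ∈ v :: l := by
      obtain rfl | ha := mem_insert.mp ha
      · exact hv b hb hab
      · exact h.mem_of_adj a ha b hb hab
    rw [List.mem_cons] at hbvl
    rw [mem_insert]
    tauto

theorem DFSState.exists_finish_vertex {l : List V} (h : DFSState H U S l)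
    (hH : (pathGraph n).Free H) (hSU : #S < #U) : ∃ v ∉ S, ∃ l', DFSState H U (insert v S) l' := by
  by_cases hext : ∃ w ∈ U \ S, w ∉ l ∧ (w :: l).IsChain H.Adj
  · obtain ⟨w, hw, hwl, hchain⟩ := hext
    exact (h.push hw hwl hchain).exists_finish_vertex hH hSU
  push Not at hext
  cases l with
  | nil =>
    obtain ⟨w, hwU, hwS⟩ := exists_mem_notMem_of_card_lt_card hSU
    exact absurd (List.isChain_singleton w)
      (hext w (mem_sdiff.mpr ⟨hwU, hwS⟩) List.not_mem_nil)
  | cons v l =>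
    have hvS : v ∉ S := (mem_sdiff.mp (h.mem_sdiff_of_mem v List.mem_cons_self)).2
    refine ⟨v, hvS, l, h.pop fun b hb hvb => ?_⟩
    by_contra! hbSl
    exact hext b (mem_sdiff.mpr ⟨hb, hbSl.1⟩) hbSl.2
      (List.isChain_cons_cons.mpr ⟨hvb.symm, h.isChain⟩)
termination_by n - l.length
decreasing_by
  exact Nat.sub_succ_lt_self n l.length (length_lt_of_pathGraph_free hH h.nodup h.isChain)

theorem exists_dfsState_card_eq (hH : (pathGraph n).Free H) {k : ℕ} (hk : k ≤ #U) :
    ∃ S l, #S = k ∧ DFSState H U S l := by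
  induction k with
  | zero => exact ⟨∅, [], card_empty, .init H U⟩
  | succ k ih =>
    obtain ⟨S, l, rfl, h⟩ := ih (by lia)
    obtain ⟨v, hv, l', h'⟩ := h.exists_finish_vertex hH hk
    exact ⟨insert v S, l', card_insert_of_notMem hv, h'⟩

theorem exists_card_eq_forall_adj_mem_union (hH : (pathGraph n).Free H) {k : ℕ} (hk : k ≤ #U) :
    ∃ S ⊆ U, #S = k ∧ ∃ P : Finset V, #P < n ∧ ∀ a ∈ S, ∀ b ∈ U, H.Adj a b → b ∈ S ∪ P := by
  obtain ⟨S, l, hS, h⟩ := exists_dfsState_card_eq hH hk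
  refine ⟨S, h.subset, hS, l.toFinset, ?_, by simpa using h.mem_of_adj⟩
  exact (List.toFinset_card_le l).trans_lt (length_lt_of_pathGraph_free hH h.nodup h.isChain)

end DepthFirstSearch

section Peeling

variable {V : Type*} [DecidableEq V]

/-- The pairs captured by `S` and `P`: those that meet `S` and lie inside `S ∪ P`. -/
def capturedPairs (S P : Finset V) : Finset (V × V) :=
  S ×ˢ (S ∪ P) ∪ P ×ˢ S

theorem card_capturedPairs_le (S P : Finset V) :
    #(capturedPairs S P) ≤ #S * (#S + 2 * #P) :=
  calc #(capturedPairs S P) ≤ #S * #(S ∪ P) + #P * #S := by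
        simpa only [card_product, capturedPairs] using card_union_le (S ×ˢ (S ∪ P)) (P ×ˢ S)
    _ ≤ #S * (#S + #P) + #P * #S := by gcongr; exact card_union_le S P
    _ = #S * (#S + 2 * #P) := by ring

theorem mem_sdiff_product_or_mem_capturedPairs {H : SimpleGraph V} {U S P : Finset V} {x : V × V}
    (hSP : ∀ a ∈ S, ∀ b ∈ U, H.Adj a b → b ∈ S ∪ P) (hxU : x ∈ U ×ˢ U)
    (hx : x.1 ≠ x.2 → H.Adj x.1 x.2) :
    x ∈ (U \ S) ×ˢ (U \ S) ∨ x ∈ capturedPairs S P := by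
  obtain ⟨a, b⟩ := x
  obtain ⟨ha, hb⟩ := mem_product.mp hxU
  obtain rfl | hab := eq_or_ne a b
  · simp only [capturedPairs, mem_union, mem_product, mem_sdiff]
    tauto
  · have hb' := fun h : a ∈ S => hSP a h b hb (hx hab)
    have ha' := fun h : b ∈ S => hSP b h a ha (hx hab).symm
    simp only [capturedPairs, mem_union, mem_product, mem_sdiff] at ha' hb' ⊢
    tauto

variable [Finite V] {ι : Type*} {H : SimpleGraph V} {n t : ℕ}

theorem card_pairs_le_of_pathGraph_free (hH : (pathGraph n).Free H) {I : Finset ι}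
    {f : ι → V × V} (hf : ∀ i ∈ I, (f i).1 ≠ (f i).2 → H.Adj (f i).1 (f i).2)
    (ht : ∀ S P : Finset V, #S = n → #P = n → #{i ∈ I | f i ∈ capturedPairs S P} ≤ t)
    {M : ℕ} {U : Finset V} (hU : #U = M * n) :
    #{i ∈ I | f i ∈ U ×ˢ U} ≤ M * t := by
  classical
  cases nonempty_fintype V
  induction M generalizing U with
  | zero =>
    obtain rfl : U = ∅ := by simpa using hU
    simp
  | succ M ih =>
    have hnU : n ≤ #U := hU ▸ Nat.le_mul_of_pos_left n M.succ_pos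
    obtain ⟨S, hSU, hS, P', hP', hSP'⟩ := exists_card_eq_forall_adj_mem_union hH hnU
    obtain ⟨P, hP'P, hP⟩ := exists_superset_card_eq hP'.le (hnU.trans (card_le_univ U))
    have hSP : ∀ a ∈ S, ∀ b ∈ U, H.Adj a b → b ∈ S ∪ P := fun a ha b hb hab =>
      union_subset_union_right hP'P (hSP' a ha b hb hab)
    have hrest : #(U \ S) = M * n := by
      rw [card_sdiff_of_subset hSU, hU, hS, Nat.succ_mul, Nat.add_sub_cancel]
    have hsub : ({i ∈ I | f i ∈ U ×ˢ U} : Finset ι) ⊆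
        {i ∈ I | f i ∈ (U \ S) ×ˢ (U \ S)} ∪ {i ∈ I | f i ∈ capturedPairs S P} := by
      intro i hi
      obtain ⟨hiI, hiU⟩ := mem_filter.mp hi
      rw [← filter_or, mem_filter]
      exact ⟨hiI, mem_sdiff_product_or_mem_capturedPairs hSP hiU (hf i hiI)⟩
    calc #{i ∈ I | f i ∈ U ×ˢ U}
        ≤ #{i ∈ I | f i ∈ (U \ S) ×ˢ (U \ S)} + #{i ∈ I | f i ∈ capturedPairs S P} :=
          (card_le_card hsub).trans (card_union_le _ _)
      _ ≤ M * t + t := add_le_add (ih hrest) (ht S P hS hP)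
      _ = (M + 1) * t := (Nat.succ_mul M t).symm

end Peeling

section Arrows

theorem arrows_iff_exists_isContained {V W : Type*} {G : SimpleGraph V} {F : SimpleGraph W}
    {r : ℕ} :
    Arrows G F r ↔ ∀ c : Sym2 V → Fin r, ∃ k, F ⊑ fromEdgeSet (G.edgeSet ∩ c ⁻¹' {k}) := by
  have hadj (c : Sym2 V → Fin r) (k : Fin r) (a b : V) :
      (fromEdgeSet (G.edgeSet ∩ c ⁻¹' {k})).Adj a b ↔ G.Adj a b ∧ c s(a, b) = k := by
    simp +contextual [G.ne_of_adj]
  refine forall_congr' fun c => exists_congr fun k => ⟨?_, ?_⟩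
  · rintro ⟨f, hinj, hf⟩
    exact ⟨⟨⟨f, fun {a b} hab => (hadj c k _ _).mpr (hf a b hab)⟩, hinj⟩⟩
  · rintro ⟨f⟩
    exact ⟨f, f.injective, fun a b hab => (hadj c k _ _).mp (f.toHom.map_adj hab)⟩

theorem arrows_pathGraph_of_card_capturedPairs_le {V ι : Type*} [Fintype V] [DecidableEq V]
    [Fintype ι] {M n r t : ℕ} (f : ι → V × V) (hV : Fintype.card V = M * n)
    (ht : ∀ S P : Finset V, #S = n → #P = n → #{i | f i ∈ capturedPairs S P} ≤ t)
    (hι : r * (M * t) < Fintype.card ι) :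
    Arrows (fromEdgeSet (Set.range fun i => s((f i).1, (f i).2))) (pathGraph n) r := by
  refine arrows_iff_exists_isContained.mpr fun c => ?_
  obtain ⟨k, hk⟩ : ∃ k, M * t < #{i | c s((f i).1, (f i).2) = k} :=
    Fintype.exists_lt_card_fiber_of_mul_lt_card _ (by rwa [Fintype.card_fin])
  refine ⟨k, by_contra fun hfree => hk.not_ge ?_⟩
  have hle := card_pairs_le_of_pathGraph_free (U := univ) (t := t) hfree
    (f := f) (I := {i | c s((f i).1, (f i).2) = k}) ?_ ?_ hV
  · simpa using hle
  · intro i hi hne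
    rw [fromEdgeSet_adj, edgeSet_fromEdgeSet]
    exact ⟨⟨⟨Set.mem_range_self i, hne⟩, (mem_filter.mp hi).2⟩, hne⟩
  · intro S P hS hP
    exact (card_le_card (filter_subset_filter _ (subset_univ _))).trans (ht S P hS hP)

theorem ncard_edgeSet_fromEdgeSet_range_le {V ι : Type*} [Fintype ι] (e : ι → Sym2 V) :
    (fromEdgeSet (Set.range e)).edgeSet.ncard ≤ Fintype.card ι := by
  calc (fromEdgeSet (Set.range e)).edgeSet.ncard ≤ (Set.range e).ncard := by
        rw [edgeSet_fromEdgeSet]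
        exact Set.ncard_le_ncard Set.sdiff_subset (Set.finite_range e)
    _ ≤ (Set.univ : Set ι).ncard := by
        rw [← Set.image_univ]
        exact Set.ncard_image_le Set.finite_univ
    _ = Fintype.card ι := by rw [Set.ncard_univ, Nat.card_eq_fintype_card]

theorem sizeRamsey_le_of_arrows {W : Type*} {F : SimpleGraph W} {r N : ℕ}
    {G : SimpleGraph (Fin N)} (h : Arrows G F r) : sizeRamsey F r ≤ G.edgeSet.ncard :=
  Nat.sInf_le ⟨N, G, rfl, h⟩

end Arrows

section Estimates

theorem choose_mul_self_le (c n : ℕ) : ((c * n).choose n : ℝ) ≤ (c * Real.exp 1) ^ n := by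
  calc ((c * n).choose n : ℝ) ≤ ((c * n : ℕ) : ℝ) ^ n / n.factorial := Nat.choose_le_pow_div _ _
    _ = c ^ n * ((n : ℝ) ^ n / n.factorial) := by push_cast; ring
    _ ≤ c ^ n * Real.exp n := by
        gcongr
        exact Real.pow_div_factorial_le_exp _ (Nat.cast_nonneg n) _
    _ = (c * Real.exp 1) ^ n := by rw [mul_pow, ← Real.exp_nat_mul, mul_one]

theorem choose_six_mul_le {r : ℕ} (hr : 2 ≤ r) (n : ℕ) :
    ((6 * r * n).choose n : ℝ) ≤ (r ^ 6) ^ n := by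
  have hr' : (2 : ℝ) ≤ r := by exact_mod_cast hr
  calc ((6 * r * n).choose n : ℝ) ≤ ((6 * r : ℕ) * Real.exp 1) ^ n := choose_mul_self_le _ _
    _ ≤ (r ^ 6) ^ n := by
        gcongr
        calc ((6 * r : ℕ) : ℝ) * Real.exp 1 ≤ (6 * r : ℕ) * 3 := by
              gcongr; exact Real.exp_one_lt_three.le
          _ ≤ 2 ^ 5 * r := by push_cast; linarith
          _ ≤ r ^ 5 * r := by gcongr
          _ = r ^ 6 := by ring

theorem add_pow_le_pow_mul_exp {q b : ℝ} (hq : 0 < q) (hb : 0 ≤ b) (m : ℕ) :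
    (q + b) ^ m ≤ q ^ m * Real.exp (m * (b / q)) := by
  calc (q + b) ^ m = (q * (b / q + 1)) ^ m := by field_simp; ring
    _ ≤ (q * Real.exp (b / q)) ^ m := by gcongr; exact Real.add_one_le_exp _
    _ = q ^ m * Real.exp (m * (b / q)) := by rw [mul_pow, Real.exp_nat_mul]

theorem lt_log_natCast_of_two_le {r : ℕ} (hr : 2 ≤ r) : 0.69 < Real.log r := by
  calc (0.69 : ℝ) < Real.log 2 := by linarith [Real.log_two_gt_d9]
    _ ≤ Real.log r := Real.log_le_log two_pos (by exact_mod_cast hr)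

theorem pow_mul_exp_half_lt_two_pow {r n s : ℕ} (hr : 2 ≤ r) (hn : 0 < n)
    (hs : 90 * Real.log r * n ≤ s) :
    ((r : ℝ) ^ 6) ^ n * (r ^ 6) ^ n * Real.exp (s / 2) < 2 ^ s := by
  have hlog : 0 < Real.log r * n :=
    mul_pos (by linarith [lt_log_natCast_of_two_le hr]) (by exact_mod_cast hn)
  have hlog_two : (s : ℝ) * 0.69 ≤ s * Real.log 2 := by
    gcongr
    linarith [Real.log_two_gt_d9]
  have hexp_log : (r : ℝ) = Real.exp (Real.log r) := (Real.exp_log (by positivity)).symm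
  calc ((r : ℝ) ^ 6) ^ n * (r ^ 6) ^ n * Real.exp (s / 2)
      = Real.exp (12 * (Real.log r * n) + s / 2) := by
        rw [← pow_add, ← pow_mul, hexp_log, ← Real.exp_nat_mul, ← Real.exp_add, Real.log_exp]
        congr 1
        push_cast
        ring
    _ < Real.exp (s * Real.log 2) := Real.exp_lt_exp.mpr (by linarith)
    _ = 2 ^ s := by rw [Real.exp_nat_mul, Real.exp_log two_pos]

theorem choose_mul_choose_mul_pow_lt {r n s : ℕ} (hr : 2 ≤ r) (hn : 0 < n)
    (hs : 90 * Real.log r * n ≤ s) :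
    (6 * r * n).choose n * (6 * r * n).choose n *
        (6 * r * n * (6 * r * n) + 3 * n ^ 2) ^ (6 * r * r * s) <
      2 ^ s * (6 * r * n * (6 * r * n)) ^ (6 * r * r * s) := by
  set q : ℝ := 6 * r * n * (6 * r * n)
  have hq : 0 < q := by positivity
  have hchoose := choose_six_mul_le hr n
  have hexponent : (6 * r * r * s : ℕ) * (3 * n ^ 2 / q) = (s : ℝ) / 2 := by
    simp only [q]; push_cast; field_simp; ring
  have hpow : (q + 3 * n ^ 2) ^ (6 * r * r * s) ≤ q ^ (6 * r * r * s) * Real.exp (s / 2) :=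
    hexponent ▸ add_pow_le_pow_mul_exp hq (by positivity) _
  have hreal : ((6 * r * n).choose n : ℝ) * (6 * r * n).choose n *
      (q + 3 * n ^ 2) ^ (6 * r * r * s) < 2 ^ s * q ^ (6 * r * r * s) := by
    calc ((6 * r * n).choose n : ℝ) * (6 * r * n).choose n * (q + 3 * n ^ 2) ^ (6 * r * r * s)
        ≤ (r ^ 6) ^ n * (r ^ 6) ^ n * (q ^ (6 * r * r * s) * Real.exp (s / 2)) := by gcongr
      _ = (r ^ 6) ^ n * (r ^ 6) ^ n * Real.exp (s / 2) * q ^ (6 * r * r * s) := by ring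
      _ < 2 ^ s * q ^ (6 * r * r * s) := by gcongr; exact pow_mul_exp_half_lt_two_pow hr hn hs
  simp only [q] at hreal
  exact_mod_cast hreal

end Estimates

theorem exists_forall_card_capturedPairs_lt {V κ : Type*} [Fintype V] [DecidableEq V] [Fintype κ]
    {r n s : ℕ} (hr : 2 ≤ r) (hn : 0 < n) (hs : 90 * Real.log r * n ≤ s)
    (hV : Fintype.card V = 6 * r * n) (hκ : Fintype.card κ = 6 * r * r * s) :
    ∃ f : κ → V × V, ∀ S P : Finset V, #S = n → #P = n → #{i | f i ∈ capturedPairs S P} < s := by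
  let I : Finset (Finset V × Finset V) := powersetCard n univ ×ˢ powersetCard n univ
  have hcard : ∀ SP ∈ I, #(capturedPairs SP.1 SP.2) ≤ 3 * n ^ 2 := by
    rintro ⟨S, P⟩ hSP
    simp only [I, mem_product, mem_powersetCard_univ] at hSP
    refine (card_capturedPairs_le S P).trans_eq ?_
    rw [hSP.1, hSP.2]
    ring
  obtain ⟨f, hf⟩ := exists_forall_card_hits_lt (κ := κ) (s := s) I _ hcard (by
    simpa only [I, card_product, card_powersetCard, card_univ, Fintype.card_prod, hV, hκ]
      using choose_mul_choose_mul_pow_lt hr hn hs)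
  exact ⟨f, fun S P hS hP => hf (S, P) (by simp [I, hS, hP])⟩

theorem sizeRamsey_path_lt_general (r : ℕ) (hr : 2 ≤ r) (n : ℕ) (hn : 0 < n) :
    (sizeRamsey (pathGraph n) r : ℝ) < 600 * Real.log r * r ^ 2 * n := by
  have hlog : 0.69 < Real.log r := lt_log_natCast_of_two_le hr
  have hn1 : (1 : ℝ) ≤ n := by exact_mod_cast hn
  set t := ⌊90 * Real.log r * n⌋₊
  have ht : (t : ℝ) + 1 < 100 * Real.log r * n := by
    have hfloor : (t : ℝ) ≤ 90 * Real.log r * n := Nat.floor_le (by positivity)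
    nlinarith
  obtain ⟨f, hf⟩ := exists_forall_card_capturedPairs_lt (V := Fin (6 * r * n))
    (κ := Fin (6 * r * r * (t + 1))) hr hn (by exact_mod_cast (Nat.lt_floor_add_one _).le)
    (Fintype.card_fin _) (Fintype.card_fin _)
  have hpairs : r * (6 * r * t) < Fintype.card (Fin (6 * r * r * (t + 1))) := by
    rw [Fintype.card_fin]
    nlinarith
  have harrows := arrows_pathGraph_of_card_capturedPairs_le f (Fintype.card_fin _)
    (fun S P hS hP => Nat.le_of_lt_succ (hf S P hS hP)) hpairs
  calc (sizeRamsey (pathGraph n) r : ℝ) ≤ (6 * r * r * (t + 1) : ℕ) := by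
        have hedges := ncard_edgeSet_fromEdgeSet_range_le fun i => s((f i).1, (f i).2)
        rw [Fintype.card_fin] at hedges
        exact_mod_cast (sizeRamsey_le_of_arrows harrows).trans hedges
    _ = 6 * r ^ 2 * (t + 1) := by push_cast; ring
    _ < 6 * r ^ 2 * (100 * Real.log r * n) := by gcongr
    _ = 600 * Real.log r * r ^ 2 * n := by ring

/-- For every integer `r ≥ 2` there is `N` such that for all `n ≥ N`,
`R̂(Pₙ, r) < 600 (log r) r² n`. -/
theorem sizeRamsey_path_lt (r : ℕ) (hr : 2 ≤ r) :
    ∃ N : ℕ, ∀ n : ℕ, N ≤ n →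
      (sizeRamsey (pathGraph n) r : ℝ) < 600 * Real.log r * r ^ 2 * n :=
  ⟨1, fun n hn => sizeRamsey_path_lt_general r hr n hn⟩
end

section
/- For every integer r ≥ 2 there exists an integer N = N(r) such that for every integer n ≥ N there exists a (simple) graph G = (V, E) with the following three properties: (i) |V| = 7rn; (ii) 500 (log r) r² n < |E| < 600 (log r) r² n; and (iii) for every two disjoint sets S, T ⊆ V with |S| = |T| = n, the number of edges of G having both endpoints in S ∪ T and at least one endpoint in S is at most 70 (log r) n. -/
open SimpleGraph

/-- The set of edges of `G` with both endpoints in `S ∪ T` and at least one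
endpoint in `S`. -/
def crossEdges {V : Type*} (G : SimpleGraph V) (S T : Set V) : Set (Sym2 V) :=
  {e ∈ G.edgeSet | (∀ v ∈ e, v ∈ S ∪ T) ∧ ∃ v ∈ e, v ∈ S}

/-! In a random graph on `7rn` vertices with `m ≤ 512 (log r) r² n` edges, each pair `(S, T)` is
expected to carry at most `32 (log r) n` of the edges counted in (iii), and there are at most
`exp (11 (log r) n)` pairs. A union bound over the moments of `2 ^ (number of counted edges)` thus
succeeds, because `exp 43 ≤ 2 ^ 70`. The method of conditional expectations replaces randomness:
edges are added one at a time, each chosen so that the sum of `2 ^ (number of counted edges)` over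
all pairs grows by no more than its average factor, which is at most `1 + 1 / (16 r²)`. -/

section Greedy

variable {α ι : Type*} [DecidableEq α] {b q : ℝ}

theorem sum_sdiff_pow_card_insert_inter_le (hb : 1 ≤ b) (E A B : Finset α) :
    ∑ e ∈ E \ A, b ^ (insert e A ∩ B).card ≤
      ((E \ A).card + (b - 1) * B.card) * b ^ (A ∩ B).card := by
  have hterm : ∀ e ∈ E \ A, b ^ (insert e A ∩ B).card =
      (1 + if e ∈ B then b - 1 else 0) * b ^ (A ∩ B).card := by
    intro e he
    have heA : e ∉ A := (Finset.mem_sdiff.mp he).2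
    by_cases heB : e ∈ B
    · rw [Finset.insert_inter_of_mem heB, Finset.card_insert_of_notMem (by simp [heA]), pow_succ,
        if_pos heB]
      ring
    · rw [Finset.insert_inter_of_notMem heB, if_neg heB, add_zero, one_mul]
  have hcard : (((E \ A) ∩ B).card : ℝ) ≤ B.card := by
    exact_mod_cast Finset.card_le_card Finset.inter_subset_right
  have : 0 ≤ b - 1 := by linarith
  rw [Finset.sum_congr rfl hterm, ← Finset.sum_mul, Finset.sum_add_distrib, Finset.sum_ite_mem,
    Finset.sum_const, Finset.sum_const, nsmul_eq_mul, nsmul_eq_mul, mul_one, mul_comm _ (b - 1)]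
  gcongr

theorem exists_sum_pow_card_insert_inter_le (hb : 1 ≤ b) {E A : Finset α}
    (hA : (E \ A).Nonempty) {I : Finset ι} {B : ι → Finset α}
    (hB : ∀ i ∈ I, ((B i).card : ℝ) ≤ q * (E \ A).card) :
    ∃ e ∈ E \ A, ∑ i ∈ I, b ^ (insert e A ∩ B i).card ≤
      (1 + (b - 1) * q) * ∑ i ∈ I, b ^ (A ∩ B i).card := by
  refine Finset.exists_le_of_sum_le hA ?_
  have : 0 ≤ b - 1 := by linarith
  calc ∑ e ∈ E \ A, ∑ i ∈ I, b ^ (insert e A ∩ B i).card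
      = ∑ i ∈ I, ∑ e ∈ E \ A, b ^ (insert e A ∩ B i).card := Finset.sum_comm
    _ ≤ ∑ i ∈ I, ((E \ A).card + (b - 1) * (B i).card) * b ^ (A ∩ B i).card :=
        Finset.sum_le_sum fun i _ => sum_sdiff_pow_card_insert_inter_le hb E A (B i)
    _ ≤ ∑ i ∈ I, ((E \ A).card + (b - 1) * (q * (E \ A).card)) * b ^ (A ∩ B i).card := by
        gcongr with i hi
        exact hB i hi
    _ = ∑ _e ∈ E \ A, (1 + (b - 1) * q) * ∑ i ∈ I, b ^ (A ∩ B i).card := by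
        rw [Finset.sum_const, nsmul_eq_mul, ← Finset.mul_sum]
        ring

theorem exists_subset_card_eq_sum_pow_card_inter_le (hb : 1 ≤ b) (hq : 0 ≤ q) {E : Finset α}
    {m : ℕ} (hm : m ≤ E.card) {I : Finset ι} {B : ι → Finset α}
    (hB : ∀ i ∈ I, ((B i).card : ℝ) ≤ q * (E.card - m)) :
    ∃ A ⊆ E, A.card = m ∧
      ∑ i ∈ I, b ^ (A ∩ B i).card ≤ I.card * (1 + (b - 1) * q) ^ m := by
  have : 0 ≤ 1 + (b - 1) * q := by nlinarith
  suffices h : ∀ t ≤ m, ∃ A ⊆ E, A.card = t ∧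
      ∑ i ∈ I, b ^ (A ∩ B i).card ≤ I.card * (1 + (b - 1) * q) ^ t from h m le_rfl
  intro t
  induction t with
  | zero => exact fun _ => ⟨∅, by simp⟩
  | succ t ih =>
    intro ht
    obtain ⟨A, hAE, hAt, hA⟩ := ih (by omega)
    have hcard : (E \ A).card = E.card - t := by rw [Finset.card_sdiff_of_subset hAE, hAt]
    have hB' : ∀ i ∈ I, ((B i).card : ℝ) ≤ q * (E \ A).card := by
      intro i hi
      refine (hB i hi).trans ?_
      rw [hcard, ← Nat.cast_sub hm]
      gcongr
      omega
    obtain ⟨e, he, hle⟩ :=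
      exists_sum_pow_card_insert_inter_le hb (Finset.card_pos.mp (by omega)) hB'
    obtain ⟨heE, heA⟩ := Finset.mem_sdiff.mp he
    refine ⟨insert e A, Finset.insert_subset heE hAE, by
      rw [Finset.card_insert_of_notMem heA, hAt], ?_⟩
    calc ∑ i ∈ I, b ^ (insert e A ∩ B i).card
        ≤ (1 + (b - 1) * q) * ∑ i ∈ I, b ^ (A ∩ B i).card := hle
      _ ≤ (1 + (b - 1) * q) * (I.card * (1 + (b - 1) * q) ^ t) := by gcongr
      _ = I.card * (1 + (b - 1) * q) ^ (t + 1) := by ring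

theorem exists_subset_card_eq_forall_card_inter_le (hb : 1 < b) (hq : 0 ≤ q) {E : Finset α}
    {m : ℕ} (hm : m ≤ E.card) {I : Finset ι} {B : ι → Finset α}
    (hB : ∀ i ∈ I, ((B i).card : ℝ) ≤ q * (E.card - m)) {K : ℝ}
    (hK : I.card * (1 + (b - 1) * q) ^ m ≤ b ^ K) :
    ∃ A ⊆ E, A.card = m ∧ ∀ i ∈ I, ((A ∩ B i).card : ℝ) ≤ K := by
  obtain ⟨A, hAE, hAm, hA⟩ := exists_subset_card_eq_sum_pow_card_inter_le hb.le hq hm hB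
  refine ⟨A, hAE, hAm, fun i hi => (Real.rpow_le_rpow_left_iff hb).mp ?_⟩
  rw [Real.rpow_natCast]
  calc b ^ (A ∩ B i).card ≤ ∑ j ∈ I, b ^ (A ∩ B j).card :=
        Finset.single_le_sum (f := fun j => b ^ (A ∩ B j).card) (fun _ _ => by positivity) hi
    _ ≤ b ^ K := hA.trans hK

end Greedy

section CrossEdges

variable {V : Type*}

theorem crossEdges_eq_edgeSet_inter_crossEdges_top (G : SimpleGraph V) (S T : Set V) :
    crossEdges G S T = G.edgeSet ∩ crossEdges ⊤ S T := by
  ext e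
  have htop : e ∈ G.edgeSet → e ∈ (⊤ : SimpleGraph V).edgeSet := fun he => edgeSet_mono le_top he
  simp only [crossEdges, Set.mem_inter_iff, Set.mem_ofPred_eq]
  tauto

theorem crossEdges_subset_image_offDiag_union_image_product [DecidableEq V] (G : SimpleGraph V)
    (S T : Finset V) :
    crossEdges G S T ⊆ (S.offDiag.image Sym2.mk.uncurry ∪ (S ×ˢ T).image Sym2.mk.uncurry :
      Finset (Sym2 V)) := by
  have mem_of_adj : ∀ x y, G.Adj x y → x ∈ S → y ∈ S ∨ y ∈ T →
      s(x, y) ∈ S.offDiag.image Sym2.mk.uncurry ∪ (S ×ˢ T).image Sym2.mk.uncurry := by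
    rintro x y hxy hx (hy | hy)
    · exact Finset.mem_union_left _ (Finset.mem_image.mpr
        ⟨(x, y), Finset.mem_offDiag.mpr ⟨hx, hy, hxy.ne⟩, rfl⟩)
    · exact Finset.mem_union_right _ (Finset.mem_image.mpr
        ⟨(x, y), Finset.mem_product.mpr ⟨hx, hy⟩, rfl⟩)
  intro e
  induction e using Sym2.ind with | _ x y
  rintro ⟨hxy, hST, v, hv, hvS⟩
  rcases Sym2.mem_iff.mp hv with rfl | rfl
  · exact mem_of_adj v y hxy hvS (hST y (Sym2.mem_mk_right v y))
  · rw [Sym2.eq_swap]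
    exact mem_of_adj v x hxy.symm hvS (hST x (Sym2.mem_mk_left x v))

theorem ncard_crossEdges_le (G : SimpleGraph V) (S T : Finset V) :
    (crossEdges G S T).ncard ≤ S.card.choose 2 + S.card * T.card := by
  classical
  calc (crossEdges G S T).ncard
      ≤ (S.offDiag.image Sym2.mk.uncurry ∪ (S ×ˢ T).image Sym2.mk.uncurry).card := by
        rw [← Set.ncard_coe_finset]
        exact Set.ncard_le_ncard (crossEdges_subset_image_offDiag_union_image_product G S T)
          (Finset.finite_toSet _)
    _ ≤ (S.offDiag.image Sym2.mk.uncurry).card + ((S ×ˢ T).image Sym2.mk.uncurry).card :=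
        Finset.card_union_le _ _
    _ ≤ S.card.choose 2 + S.card * T.card := by
        rw [Sym2.card_image_offDiag, ← Finset.card_product]
        gcongr
        exact Finset.card_image_le

theorem exists_edgeSet_ncard_eq_forall_ncard_crossEdges_le [Fintype V] {b q K : ℝ} {m n : ℕ}
    (hb : 1 < b) (hq : 0 ≤ q) (hm : m ≤ (Fintype.card V).choose 2)
    (hcross : (n.choose 2 + n * n : ℝ) ≤ q * ((Fintype.card V).choose 2 - m))
    (hK : ((Fintype.card V).choose n : ℝ) ^ 2 * (1 + (b - 1) * q) ^ m ≤ b ^ K) :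
    ∃ G : SimpleGraph V, G.edgeSet.ncard = m ∧
      ∀ S T : Set V, S.ncard = n → T.ncard = n → ((crossEdges G S T).ncard : ℝ) ≤ K := by
  classical
  let P := Finset.powersetCard n (Finset.univ : Finset V)
  let B (p : Finset V × Finset V) : Finset (Sym2 V) := (crossEdges ⊤ (p.1 : Set V) p.2).toFinset
  have hE := card_edgeFinset_top_eq_card_choose_two (V := V)
  have hB : ∀ p ∈ P ×ˢ P, ((B p).card : ℝ) ≤ q * ((⊤ : SimpleGraph V).edgeFinset.card - m) := by
    intro p hp
    obtain ⟨hS, hT⟩ := Finset.mem_product.mp hp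
    have hle := ncard_crossEdges_le ⊤ p.1 p.2
    rw [(Finset.mem_powersetCard.mp hS).2, (Finset.mem_powersetCard.mp hT).2,
      Set.ncard_eq_toFinset_card'] at hle
    rw [hE]
    exact le_trans (by exact_mod_cast hle) hcross
  obtain ⟨A, hAE, hAm, hA⟩ := exists_subset_card_eq_forall_card_inter_le hb hq
    (hm.trans_eq hE.symm) hB (K := K) (by simpa [P, ← sq] using hK)
  have hedge : (fromEdgeSet (A : Set (Sym2 V))).edgeSet = A := by
    rw [edgeSet_fromEdgeSet, sdiff_eq_left, Set.disjoint_left]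
    exact fun e he => not_isDiag_of_mem_edgeFinset (hAE he)
  refine ⟨fromEdgeSet A, by rw [hedge, Set.ncard_coe_finset, hAm], fun S T hS hT => ?_⟩
  lift S to Finset V using S.toFinite
  lift T to Finset V using T.toFinite
  rw [Set.ncard_coe_finset] at hS hT
  have hcard : (crossEdges (fromEdgeSet (A : Set (Sym2 V))) S T).ncard = (A ∩ B (S, T)).card := by
    rw [crossEdges_eq_edgeSet_inter_crossEdges_top, hedge, ← Set.ncard_coe_finset,
      Finset.coe_inter, Set.coe_toFinset]
  rw [hcard]
  exact hA (S, T) (by simp [P, hS, hT])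

end CrossEdges

section Estimates

theorem choose_le_exp_of_le_mul {c : ℝ} (hc : 0 < c) {N n : ℕ} (hN : N ≤ c * n) :
    (N.choose n : ℝ) ≤ Real.exp (n * (Real.log c + 1)) :=
  calc (N.choose n : ℝ) ≤ (N : ℝ) ^ n / n.factorial := Nat.choose_le_pow_div n N
    _ ≤ (c * n) ^ n / n.factorial := by gcongr
    _ = c ^ n * ((n : ℝ) ^ n / n.factorial) := by ring
    _ ≤ c ^ n * Real.exp n := by
        gcongr
        exact Real.pow_div_factorial_le_exp _ n.cast_nonneg n
    _ = Real.exp (n * (Real.log c + 1)) := by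
        rw [mul_add, mul_one, Real.exp_add, Real.exp_nat_mul, Real.exp_log hc]

theorem exists_nat_mem_Ioc {R : Type*} [CommRing R] [LinearOrder R] [IsStrictOrderedRing R]
    [FloorSemiring R] {x y : R} (hx : 0 ≤ x) (hxy : x + 1 ≤ y) :
    ∃ m : ℕ, (m : R) ∈ Set.Ioc x y := by
  refine ⟨⌊x⌋₊ + 1, by exact_mod_cast Nat.lt_floor_add_one x, ?_⟩
  push_cast
  linarith [Nat.floor_le hx]

variable {r : ℝ}

theorem two_thirds_lt_log (hr : 2 ≤ r) : 2 / 3 < Real.log r := by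
  linarith [Real.log_two_gt_d9, Real.log_le_log (by norm_num) hr]

theorem log_seven_mul_le (hr : 2 ≤ r) : Real.log (7 * r) ≤ 4 * Real.log r := by
  have : 0 < r := by linarith
  have hcube : (2 : ℝ) ^ 3 ≤ r ^ 3 := by gcongr
  calc Real.log (7 * r) ≤ Real.log (r ^ 4) := by
        apply Real.log_le_log (by positivity)
        nlinarith
    _ = 4 * Real.log r := by rw [Real.log_pow]; norm_num

theorem choose_le_exp_log_mul (hr : 2 ≤ r) {v n : ℕ} (hv : (v : ℝ) = 7 * r * n) :
    (v.choose n : ℝ) ≤ Real.exp (11 / 2 * Real.log r * n) := by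
  refine (choose_le_exp_of_le_mul (by linarith) hv.le).trans (Real.exp_le_exp.mpr ?_)
  have hlog : Real.log (7 * r) + 1 ≤ 11 / 2 * Real.log r := by
    linarith [log_seven_mul_le hr, two_thirds_lt_log hr]
  calc n * (Real.log (7 * r) + 1) ≤ n * (11 / 2 * Real.log r) := by gcongr
    _ = 11 / 2 * Real.log r * n := by ring

theorem one_add_inv_pow_le_exp (hr : r ≠ 0) {m n : ℕ} (hm : m ≤ 512 * Real.log r * r ^ 2 * n) :
    (1 + 1 / (16 * r ^ 2)) ^ m ≤ Real.exp (32 * Real.log r * n) := by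
  calc (1 + 1 / (16 * r ^ 2)) ^ m ≤ Real.exp (1 / (16 * r ^ 2)) ^ m := by
        gcongr
        linarith [Real.add_one_le_exp (1 / (16 * r ^ 2))]
    _ = Real.exp (m * (1 / (16 * r ^ 2))) := (Real.exp_nat_mul _ _).symm
    _ ≤ Real.exp (512 * Real.log r * r ^ 2 * n * (1 / (16 * r ^ 2))) := by gcongr
    _ = Real.exp (32 * Real.log r * n) := by
        congr 1
        field_simp
        ring

theorem choose_sq_mul_one_add_inv_pow_le (hr : 2 ≤ r) {v m n : ℕ} (hv : (v : ℝ) = 7 * r * n)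
    (hm : m ≤ 512 * Real.log r * r ^ 2 * n) :
    (v.choose n : ℝ) ^ 2 * (1 + 1 / (16 * r ^ 2)) ^ m ≤ 2 ^ (70 * Real.log r * n) := by
  have hL : 0 < Real.log r := by linarith [two_thirds_lt_log hr]
  calc (v.choose n : ℝ) ^ 2 * (1 + 1 / (16 * r ^ 2)) ^ m
      ≤ Real.exp (11 / 2 * Real.log r * n) ^ 2 * Real.exp (32 * Real.log r * n) := by
        gcongr
        · exact choose_le_exp_log_mul hr hv
        · exact one_add_inv_pow_le_exp (by linarith) hm
    _ = Real.exp (43 / 70 * (70 * Real.log r * n)) := by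
        rw [← Real.exp_nat_mul, ← Real.exp_add]
        push_cast
        ring_nf
    _ ≤ Real.exp (Real.log 2 * (70 * Real.log r * n)) := by
        gcongr
        linarith [Real.log_two_gt_d9]
    _ = 2 ^ (70 * Real.log r * n) := (Real.rpow_def_of_pos two_pos _).symm

theorem mul_sq_le_choose_two_sub (hr : 1 ≤ r) {v m n : ℕ} (hn : 1024 * r + 7 ≤ n)
    (hv : (v : ℝ) = 7 * r * n) (hm : m ≤ 512 * Real.log r * r ^ 2 * n) :
    24 * r ^ 2 * n ^ 2 ≤ (v.choose 2 : ℝ) - m := by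
  have hm' : (m : ℝ) ≤ 512 * r * r ^ 2 * n := by
    refine hm.trans ?_
    gcongr
    exact Real.log_le_self (by linarith)
  have hscale : r ^ 2 * n * (1024 * r + 7) ≤ r ^ 2 * n * n := by gcongr
  have hrn : r * n ≤ r ^ 2 * n := by
    gcongr
    nlinarith
  rw [Nat.cast_choose_two, hv]
  linarith

theorem choose_two_add_sq_le (hr : 1 ≤ r) {v m n : ℕ} (hn : 1024 * r + 7 ≤ n)
    (hv : (v : ℝ) = 7 * r * n) (hm : m ≤ 512 * Real.log r * r ^ 2 * n) :
    (n.choose 2 + n * n : ℝ) ≤ 1 / (16 * r ^ 2) * (v.choose 2 - m) := by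
  have : 0 < r := by linarith
  calc (n.choose 2 + n * n : ℝ) ≤ 3 / 2 * n ^ 2 := by
        rw [Nat.cast_choose_two]
        linarith [n.cast_nonneg (α := ℝ)]
    _ = 1 / (16 * r ^ 2) * (24 * r ^ 2 * n ^ 2) := by
        field_simp
        ring
    _ ≤ 1 / (16 * r ^ 2) * (v.choose 2 - m) := by
        gcongr
        exact mul_sq_le_choose_two_sub hr hn hv hm

theorem one_le_log_mul_sq_mul (hr : 2 ≤ r) {n : ℕ} (hn : 1024 * r + 7 ≤ n) :
    1 ≤ Real.log r * r ^ 2 * n := by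
  have hL := two_thirds_lt_log hr
  calc (1 : ℝ) ≤ 2 / 3 * 2 ^ 2 * 1 := by norm_num
    _ ≤ Real.log r * r ^ 2 * n := by
        gcongr
        linarith

end Estimates

theorem exists_good_graph_general {V : Type*} [Fintype V] {r : ℝ} (hr : 2 ≤ r) {n : ℕ}
    (hn : 1024 * r + 7 ≤ n) (hV : (Fintype.card V : ℝ) = 7 * r * n) :
    ∃ G : SimpleGraph V,
      (500 * Real.log r * r ^ 2 * n < (G.edgeSet.ncard : ℝ) ∧
        (G.edgeSet.ncard : ℝ) < 600 * Real.log r * r ^ 2 * n) ∧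
      ∀ S T : Set V, S.ncard = n → T.ncard = n →
        ((crossEdges G S T).ncard : ℝ) ≤ 70 * Real.log r * n := by
  have hr1 : 1 ≤ r := by linarith
  have hscale := one_le_log_mul_sq_mul hr hn
  obtain ⟨m, hm_gt, hm_le⟩ := exists_nat_mem_Ioc (x := 500 * Real.log r * r ^ 2 * n)
    (y := 512 * Real.log r * r ^ 2 * n) (by linarith) (by linarith)
  have hm : m ≤ (Fintype.card V).choose 2 := by
    have hgap := mul_sq_le_choose_two_sub hr1 hn hV hm_le
    have hpos : 0 ≤ 24 * r ^ 2 * (n : ℝ) ^ 2 := by positivity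
    exact_mod_cast (by linarith : (m : ℝ) ≤ (Fintype.card V).choose 2)
  obtain ⟨G, rfl, hG⟩ := exists_edgeSet_ncard_eq_forall_ncard_crossEdges_le one_lt_two
    (by positivity) hm (choose_two_add_sq_le hr1 hn hV hm_le) (K := 70 * Real.log r * n) (by
      rw [show (2 : ℝ) - 1 = 1 by norm_num, one_mul]
      exact choose_sq_mul_one_add_inv_pow_le hr hV hm_le)
  exact ⟨G, ⟨hm_gt, by linarith⟩, hG⟩

/-- For every integer `r ≥ 2` there is `N = N(r)` such that for every `n ≥ N` there
is a graph `G` on `7rn` vertices with `500 (log r) r² n < |E| < 600 (log r) r² n`,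
and such that for every two disjoint vertex sets `S, T` of size `n`, the number of
edges with both endpoints in `S ∪ T` and at least one endpoint in `S` is at most
`70 (log r) n`. -/
theorem exists_good_graph (r : ℕ) (hr : 2 ≤ r) :
    ∃ N : ℕ, ∀ n : ℕ, N ≤ n →
      ∃ G : SimpleGraph (Fin (7 * r * n)),
        (500 * Real.log r * r ^ 2 * n < (G.edgeSet.ncard : ℝ) ∧
          (G.edgeSet.ncard : ℝ) < 600 * Real.log r * r ^ 2 * n) ∧
        ∀ S T : Set (Fin (7 * r * n)), Disjoint S T → S.ncard = n → T.ncard = n →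
          ((crossEdges G S T).ncard : ℝ) ≤ 70 * Real.log r * n := by
  refine ⟨1024 * r + 7, fun n hn => ?_⟩
  obtain ⟨G, hG, hST⟩ := exists_good_graph_general (V := Fin (7 * r * n)) (r := r) (n := n)
    (by exact_mod_cast hr) (by exact_mod_cast hn) (by simp)
  exact ⟨G, hG, fun S T _ => hST S T⟩
end

section
/- There exists a constant c > 0 such that for every integer r ≥ 2 and every integer n ≥ 1, the r-colour size-Ramsey number of the path on n vertices satisfies R̂(P_n, r) ≥ (r+3)r·n/4 − c r². -/
open SimpleGraph

/-!
The colouring that avoids a monochromatic `P_n` is built by induction on the number of colours.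
With `K + 2` colours, remove about `n / 2` vertices of degree at least `K + 3` one after another. If
this succeeds, the edges at these vertices get a colour of their own: fewer than `n / 2` vertices
meet all of them, so they contain no `P_n`, and the graph that remains has few enough edges for
`K + 1` colours. Otherwise the graph `H` that remains has maximum degree at most `K + 2`.

Colour such an `H` with `K + 1` colours so that the sum of the squares of all colour degrees is
minimal. Recolouring one edge shows that in its own colour its two ends have total degree at most
four, so the long monochromatic paths are isolated paths and cycles. If moreover the number of
edges joining two vertices of degree two in their colour is minimal, then a vertex deep inside a
path of one colour is, in every other colour, a leaf attached to a vertex of degree two. Hence every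
colour class has at least as many edges as there are deep vertices in all colours together, and
`O(K)` edges suffice to destroy all monochromatic paths with about `n / 4` edges. A few of these
edges can be given back to each colour without creating a `P_n`.
-/

section Paths

open Finset

variable {V : Type*} {Γ Δ : SimpleGraph V} {l m n t : ℕ} {f : ℕ → V}

/-- `f 0, …, f m` are the successive vertices of a path with `m` edges in `Γ`; the values of `f`
beyond `m` are irrelevant. This is a copy of `pathGraph (m + 1)` without the index type `Fin`. -/
def IsPathSeq (Γ : SimpleGraph V) (m : ℕ) (f : ℕ → V) : Prop :=
  Set.InjOn f (Set.Iic m) ∧ ∀ i < m, Γ.Adj (f i) (f (i + 1))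

lemma pathGraph_isContained_iff : pathGraph (m + 1) ⊑ Γ ↔ ∃ f, IsPathSeq Γ m f := by
  constructor
  · rintro ⟨φ⟩
    have hφ {i : ℕ} (hi : i ≤ m) : (Fin.ofNat (m + 1) i : ℕ) = i := Nat.mod_eq_of_lt (by lia)
    refine ⟨fun i ↦ φ (Fin.ofNat (m + 1) i), fun i hi j hj hij ↦ ?_, fun i hi ↦ ?_⟩
    · rw [← hφ hi, ← hφ hj, φ.injective hij]
    · exact φ.toHom.map_adj (pathGraph_adj.2 (.inl (by rw [hφ hi.le, hφ hi])))
  · rintro ⟨f, hinj, hadj⟩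
    refine ⟨⟨⟨fun i ↦ f i, fun {i j} hij ↦ ?_⟩, fun i j hij ↦ ?_⟩⟩
    · rcases pathGraph_adj.1 hij with h | h
      · rw [← h]
        exact hadj i (by lia)
      · rw [← h]
        exact (hadj j (by lia)).symm
    · exact Fin.ext (hinj (Nat.le_of_lt_succ i.2) (Nat.le_of_lt_succ j.2) hij)

namespace IsPathSeq

lemma inj (hf : IsPathSeq Γ m f) {i j : ℕ} (hi : i ≤ m) (hj : j ≤ m) (h : f i = f j) : i = j :=
  hf.1 hi hj h

lemma edge_inj (hf : IsPathSeq Γ m f) {i j : ℕ} (hi : i < m) (hj : j < m)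
    (h : s(f i, f (i + 1)) = s(f j, f (j + 1))) : i = j := by
  rcases Sym2.eq_iff.1 h with ⟨h1, -⟩ | ⟨h1, h2⟩
  · exact hf.inj hi.le hj.le h1
  · have := hf.inj hi.le hj h1
    have := hf.inj hi hj.le h2
    lia

lemma shift (hf : IsPathSeq Γ l f) (j : ℕ) (h : j + m ≤ l) :
    IsPathSeq Γ m (fun i ↦ f (j + i)) := by
  refine ⟨fun a (ha : a ≤ m) b (hb : b ≤ m) hab ↦ ?_, fun i hi ↦ hf.2 (j + i) (by lia)⟩
  exact Nat.add_left_cancel (hf.inj (by lia) (by lia) hab)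

end IsPathSeq

/-- A path of length `l` contains `t + 1` edge-disjoint paths of length `m`, and `Y` meets at most
`t` of them. -/
lemma free_pathGraph_of_free_deleteEdges {Y : Finset (Sym2 V)}
    (hfree : (pathGraph (m + 1)).Free (Γ.deleteEdges Y)) (hY : #Y ≤ t) (hl : (t + 1) * m ≤ l) :
    (pathGraph (l + 1)).Free Γ := by
  rw [Free, pathGraph_isContained_iff] at hfree ⊢
  rintro ⟨f, hf⟩
  have hblock {j : ℕ} (hj : j ∈ range (t + 1)) : m * j + m ≤ l := by
    have := Nat.mul_le_mul_left m (mem_range.1 hj)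
    lia
  have hmeet : ∀ j ∈ range (t + 1), ∃ i < m, s(f (m * j + i), f (m * j + i + 1)) ∈ Y := by
    intro j hj
    by_contra! h
    have hg := hf.shift (m * j) (hblock hj)
    exact hfree ⟨_, hg.1, fun i hi ↦ (deleteEdges_adj.2 ⟨hg.2 i hi, h i hi⟩)⟩
  choose! i him hiY using hmeet
  have hinj : Set.InjOn (fun j ↦ s(f (m * j + i j), f (m * j + i j + 1))) (range (t + 1)) := by
    intro a ha b hb hab
    have := hblock ha
    have := hblock hb
    have := him a ha
    have := him b hb
    have heq : m * a + i a = m * b + i b := hf.edge_inj (by lia) (by lia) hab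
    have := congrArg (· / m) heq
    simpa [Nat.mul_add_div (show 0 < m by lia), Nat.div_eq_of_lt (him a ha),
      Nat.div_eq_of_lt (him b hb)] using this
  have := card_le_card_of_injOn _ hiY hinj
  rw [card_range] at this
  lia

lemma half_le_vertexCoverNum_pathGraph (n : ℕ) :
    ((n / 2 : ℕ) : ℕ∞) ≤ (pathGraph n).vertexCoverNum := by
  classical
  obtain ⟨C, hC, hcover⟩ := vertexCoverNum_exists (pathGraph n)
  have hmeet : ∀ i : Fin (n / 2), ∃ x : C, (x : ℕ) / 2 = i := by
    intro i
    rcases hcover (pathGraph_adj (u := ⟨2 * i, by lia⟩) (v := ⟨2 * i + 1, by lia⟩) |>.2 (.inl rfl))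
      with h | h
    · exact ⟨⟨_, h⟩, by simp⟩
    · exact ⟨⟨_, h⟩, by simp; lia⟩
  choose g hg using hmeet
  have hinj : Function.Injective g := fun i j hij ↦ Fin.ext (by rw [← hg, ← hg, hij])
  calc ((n / 2 : ℕ) : ℕ∞) = ENat.card (Fin (n / 2)) := by simp
    _ ≤ ENat.card C := ENat.card_le_card_of_injective hinj
    _ = (pathGraph n).vertexCoverNum := hC

lemma free_pathGraph_of_isVertexCover {S : Finset V} {Y : Finset (Sym2 V)}
    (hS : (Γ.deleteEdges Y).IsVertexCover S) (hcard : #S + #Y < n / 2) :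
    (pathGraph n).Free Γ := by
  classical
  intro hcontained
  have hcover : Γ.IsVertexCover (S ∪ Y.image fun e ↦ e.out.1 : Finset V) := by
    intro x y hxy
    rw [coe_union, coe_image, Set.mem_union, Set.mem_union]
    by_cases he : s(x, y) ∈ Y
    · rcases Sym2.mem_iff.1 (Sym2.out_fst_mem s(x, y)) with h | h
      · exact .inl (.inr ⟨_, he, h⟩)
      · exact .inr (.inr ⟨_, he, h⟩)
    · exact (hS (deleteEdges_adj.2 ⟨hxy, he⟩)).imp .inl .inl
  have := (half_le_vertexCoverNum_pathGraph n).trans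
    ((hcontained.vertexCoverNum_le_vertexCoverNum).trans hcover.vertexCoverNum_le)
  rw [Set.encard_coe_eq_coe_finsetCard, Nat.cast_le] at this
  have := this.trans ((card_union_le _ _).trans (Nat.add_le_add_left card_image_le _))
  lia

lemma IsPathSeq.mono (hf : IsPathSeq Γ m f) (h : Γ ≤ Δ) : IsPathSeq Δ m f :=
  ⟨hf.1, fun i hi ↦ h (hf.2 i hi)⟩

lemma IsPathSeq.ne_add_two (hf : IsPathSeq Γ m f) {i : ℕ} (hi : i + 2 ≤ m) : f i ≠ f (i + 2) :=
  fun h ↦ by simpa using hf.inj (by lia) hi h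

lemma IsPathSeq.mem_of_closed (hf : IsPathSeq Γ m f) {I : Set V}
    (hI : ∀ x ∈ I, ∀ y, Γ.Adj x y → y ∈ I) {i j : ℕ} (hi : i ≤ m) (hj : j ≤ m) (hfi : f i ∈ I) :
    f j ∈ I := by
  have h0 : f 0 ∈ I := by
    induction i with
    | zero => exact hfi
    | succ i ih => exact ih (by lia) (hI _ hfi _ (hf.2 i hi).symm)
  induction j with
  | zero => exact h0
  | succ j ih => exact hI _ (ih (by lia)) _ (hf.2 j hj)

/-- No path with `m` edges has an edge branching off at an inner vertex. -/
def PathsUnbranched (Γ : SimpleGraph V) (m : ℕ) : Prop :=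
  ∀ f, IsPathSeq Γ m f → ∀ i, i + 2 ≤ m → ∀ y, Γ.Adj (f (i + 1)) y → y = f i ∨ y = f (i + 2)

lemma PathsUnbranched.anti (hΔ : PathsUnbranched Δ m) (h : Γ ≤ Δ) : PathsUnbranched Γ m :=
  fun f hf i hi y hy ↦ hΔ f (hf.mono h) i hi y (h hy)

/-- A path meeting the interior of `p` and using neither end edge of `p` is trapped among the
`m - 1` inner vertices of `p`. -/
lemma PathsUnbranched.notMem_interior (hΓ : PathsUnbranched Γ m) {p : ℕ → V}
    (hp : IsPathSeq Γ m p) (hf : IsPathSeq (Γ.deleteEdges {s(p 0, p 1), s(p (m - 1), p m)}) m f)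
    {i : ℕ} (hi : i ≤ m) : f i ∉ p '' Set.Ioo 0 m := by
  classical
  intro hfi
  have hclosed : ∀ x ∈ p '' Set.Ioo 0 m, ∀ y,
      (Γ.deleteEdges {s(p 0, p 1), s(p (m - 1), p m)}).Adj x y → y ∈ p '' Set.Ioo 0 m := by
    rintro _ ⟨j, ⟨hj0, hjm⟩, rfl⟩ y hy
    obtain ⟨j, rfl⟩ := Nat.exists_eq_add_one.2 hj0
    obtain ⟨hadj, hends⟩ := deleteEdges_adj.1 hy
    rcases hΓ p hp j (by lia) y hadj with rfl | rfl
    · refine ⟨j, ⟨Nat.pos_of_ne_zero fun h ↦ hends (.inl ?_), by lia⟩, rfl⟩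
      rw [h, Sym2.eq_swap]
    · refine ⟨j + 2, ⟨by lia, lt_of_le_of_ne hjm fun h ↦ hends (.inr ?_)⟩, rfl⟩
      rw [← h]
      rfl
  have hmaps : ∀ j ∈ range (m + 1), f j ∈ (Ioo 0 m).image p := fun j hj ↦ by
    simpa using hf.mem_of_closed hclosed hi (Nat.lt_succ_iff.1 (mem_range.1 hj)) hfi
  have hle := card_le_card_of_injOn f hmaps fun a ha b hb hab ↦
    hf.inj (Nat.lt_succ_iff.1 (mem_range.1 ha)) (Nat.lt_succ_iff.1 (mem_range.1 hb)) hab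
  have := hle.trans card_image_le
  rw [card_range, Nat.card_Ioo] at this
  lia

/-- Each path that is destroyed costs two edges and uses up `m - 3` vertices of `W`. -/
lemma PathsUnbranched.exists_edge_cut (hm : 4 ≤ m) (hΓ : PathsUnbranched Γ m) (W : Finset V)
    (hW : ∀ f, IsPathSeq Γ m f → ∀ i, 2 ≤ i → i + 2 ≤ m → f i ∈ W) :
    ∃ Z : Finset (Sym2 V), #Z * (m - 3) ≤ 2 * #W ∧
      (pathGraph (m + 1)).Free (Γ.deleteEdges Z) := by
  classical
  induction W using Finset.strongInduction generalizing Γ with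
  | H W ih =>
  by_cases hfree : (pathGraph (m + 1)).Free Γ
  · exact ⟨∅, by simp, by simpa using hfree⟩
  obtain ⟨p, hp⟩ := pathGraph_isContained_iff.1 (not_not.1 hfree)
  set J := (Icc 2 (m - 2)).image p with hJ
  have hJcard : #J = m - 3 := by
    rw [hJ, card_image_of_injOn, Nat.card_Icc]
    · lia
    · intro a ha b hb
      rw [mem_coe, mem_Icc] at ha hb
      exact hp.inj (by lia) (by lia)
  have hJW : J ⊆ W := image_subset_iff.2 fun i hi ↦ by
    rw [mem_Icc] at hi
    exact hW p hp i hi.1 (by lia)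
  have hcard := card_sdiff_add_card_eq_card hJW
  have hlt : W \ J ⊂ W := sdiff_ssubset hJW (card_pos.1 (by lia))
  have hle := Γ.deleteEdges_le {s(p 0, p 1), s(p (m - 1), p m)}
  obtain ⟨Z, hZcard, hZ⟩ := ih (W \ J) hlt (hΓ.anti hle) fun f hf i hi2 him ↦ by
    refine mem_sdiff.2 ⟨hW f (hf.mono hle) i hi2 him, fun hfJ ↦ ?_⟩
    obtain ⟨j, hj, hji⟩ := mem_image.1 hfJ
    rw [mem_Icc] at hj
    exact hΓ.notMem_interior hp hf (by lia) ⟨j, ⟨by lia, by lia⟩, hji⟩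
  refine ⟨{s(p 0, p 1), s(p (m - 1), p m)} ∪ Z, ?_, ?_⟩
  · calc _ ≤ (2 + #Z) * (m - 3) :=
          Nat.mul_le_mul_right _ ((card_union_le _ _).trans (Nat.add_le_add_right card_le_two _))
      _ = 2 * (m - 3) + #Z * (m - 3) := by ring
      _ ≤ 2 * #W := by lia
  · rwa [coe_union, ← deleteEdges_deleteEdges, coe_pair]

end Paths

section LightEdges

open Finset Classical

variable {V : Type*} [Fintype V] {Γ : SimpleGraph V} {u v : V} {m : ℕ} {f : ℕ → V}

/-- `v` and all its neighbours have degree two. -/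
def IsInner (Γ : SimpleGraph V) (v : V) : Prop :=
  Γ.degree v = 2 ∧ ∀ w, Γ.Adj v w → Γ.degree w = 2

/-- The ends of the edges both of whose ends are inner vertices; in a graph of maximum degree two
they are the vertices that have two further vertices on one side and three on the other. -/
noncomputable def deepVertices (Γ : SimpleGraph V) : Finset V :=
  {v | IsInner Γ v ∧ ∃ w, Γ.Adj v w ∧ IsInner Γ w}

lemma pair_subset_neighborFinset (hf : IsPathSeq Γ m f) {i : ℕ} (hi : i + 2 ≤ m) :
    {f i, f (i + 2)} ⊆ Γ.neighborFinset (f (i + 1)) := by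
  simp only [insert_subset_iff, singleton_subset_iff, mem_neighborFinset]
  exact ⟨(hf.2 i (by lia)).symm, hf.2 (i + 1) hi⟩

lemma IsPathSeq.degree_eq_two (hΓ : ∀ x y, Γ.Adj x y → Γ.degree x + Γ.degree y ≤ 4)
    (hm : 3 ≤ m) (hf : IsPathSeq Γ m f) {i : ℕ} (hi : i + 2 ≤ m) : Γ.degree (f (i + 1)) = 2 := by
  have hlow : ∀ j, j + 2 ≤ m → 2 ≤ Γ.degree (f (j + 1)) := fun j hj ↦
    (card_pair (hf.ne_add_two hj)).ge.trans (card_le_card (pair_subset_neighborFinset hf hj))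
  have := hlow i hi
  by_cases h : i + 3 ≤ m
  · have := hlow (i + 1) h
    have := hΓ _ _ (hf.2 (i + 1) hi)
    lia
  · obtain ⟨j, rfl⟩ := Nat.exists_eq_add_one.2 (show 0 < i by lia)
    have := hlow j (by lia)
    have := hΓ _ _ (hf.2 (j + 1) (by lia))
    lia

lemma pathsUnbranched_of_degree_add_degree_le
    (hΓ : ∀ x y, Γ.Adj x y → Γ.degree x + Γ.degree y ≤ 4) (hm : 3 ≤ m) :
    PathsUnbranched Γ m := by
  intro f hf i hi y hy
  have heq := eq_of_subset_of_card_le (pair_subset_neighborFinset hf hi)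
    ((hf.degree_eq_two hΓ hm hi).trans (card_pair (hf.ne_add_two hi)).symm).le
  rw [← mem_neighborFinset, ← heq] at hy
  simpa using hy

lemma IsPathSeq.isInner (hΓ : ∀ x y, Γ.Adj x y → Γ.degree x + Γ.degree y ≤ 4)
    (hm : 3 ≤ m) (hf : IsPathSeq Γ m f) {i : ℕ} (hi : i + 4 ≤ m) : IsInner Γ (f (i + 2)) := by
  refine ⟨hf.degree_eq_two hΓ hm (by lia), fun y hy ↦ ?_⟩
  rcases pathsUnbranched_of_degree_add_degree_le hΓ hm f hf (i + 1) (by lia) y hy with rfl | rfl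
  · exact hf.degree_eq_two hΓ hm (by lia)
  · exact hf.degree_eq_two hΓ hm (by lia)

lemma IsPathSeq.mem_deepVertices (hΓ : ∀ x y, Γ.Adj x y → Γ.degree x + Γ.degree y ≤ 4)
    (hm : 5 ≤ m) (hf : IsPathSeq Γ m f) {i : ℕ} (hi : i + 4 ≤ m) : f (i + 2) ∈ deepVertices Γ := by
  refine mem_filter.2 ⟨mem_univ _, hf.isInner hΓ (by lia) hi, ?_⟩
  by_cases h : i + 5 ≤ m
  · exact ⟨f (i + 3), hf.2 (i + 2) (by lia), hf.isInner hΓ (by lia) h⟩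
  · obtain ⟨j, rfl⟩ := Nat.exists_eq_add_one.2 (show 0 < i by lia)
    exact ⟨f (j + 2), (hf.2 (j + 2) (by lia)).symm, hf.isInner hΓ (by lia) (by lia)⟩

lemma exists_edge_cut_of_degree_add_degree_le
    (hΓ : ∀ x y, Γ.Adj x y → Γ.degree x + Γ.degree y ≤ 4) (hm : 5 ≤ m) :
    ∃ Z : Finset (Sym2 V), #Z * (m - 3) ≤ 2 * #(deepVertices Γ) ∧
      (pathGraph (m + 1)).Free (Γ.deleteEdges Z) := by
  refine (pathsUnbranched_of_degree_add_degree_le hΓ (by lia)).exists_edge_cut (by lia) _ ?_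
  intro f hf i hi2 him
  obtain ⟨i, rfl⟩ := Nat.exists_eq_add_of_le' hi2
  exact hf.mem_deepVertices hΓ hm him

/-- The edges both of whose ends have degree two. -/
noncomputable def innerEdges (Γ : SimpleGraph V) : Finset (Sym2 V) :=
  {e | e ∈ Γ.edgeSet ∧ ∀ x ∈ e, Γ.degree x = 2}

lemma mem_innerEdges [DecidableRel Γ.Adj] {e : Sym2 V} :
    e ∈ innerEdges Γ ↔ e ∈ Γ.edgeSet ∧ ∀ x ∈ e, Γ.degree x = 2 := by
  simp only [innerEdges, mem_filter, mem_univ, true_and]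
  congr!

/-- The leaves whose neighbour has degree two. -/
noncomputable def pendants (Γ : SimpleGraph V) : Finset V :=
  {v | Γ.degree v = 1 ∧ ∃ w, Γ.Adj v w ∧ Γ.degree w = 2}

lemma incidenceFinset_subset_innerEdges (hv : IsInner Γ v) :
    Γ.incidenceFinset v ⊆ innerEdges Γ := by
  intro e he
  obtain ⟨hedge, hve⟩ := Γ.mem_incidenceFinset v e |>.1 he
  obtain ⟨w, rfl⟩ := Sym2.mem_iff_exists.1 hve
  refine mem_innerEdges.2 ⟨hedge, fun x hx ↦ ?_⟩
  rcases Sym2.mem_iff.1 hx with rfl | rfl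
  · exact hv.1
  · exact hv.2 _ hedge

/-- Each deep vertex lies on two inner edges. -/
lemma card_deepVertices_le : #(deepVertices Γ) ≤ #(innerEdges Γ) := by
  refine Nat.le_of_mul_le_mul_right (c := 2) ?_ two_pos
  refine card_mul_le_card_mul (fun v e ↦ v ∈ e) (fun v hv ↦ ?_) (fun e _ ↦ ?_)
  · have hinner := (mem_filter.1 hv).2.1
    rw [← hinner.1, ← card_incidenceFinset_eq_degree]
    refine card_le_card fun e he ↦ mem_filter.2 ⟨?_, (Γ.mem_incidenceFinset v e |>.1 he).2⟩
    exact incidenceFinset_subset_innerEdges hinner he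
  · calc _ ≤ #e.toFinset := card_le_card fun v hv ↦ Sym2.mem_toFinset.2 (mem_filter.1 hv).2
      _ ≤ 2 := by rw [Sym2.card_toFinset]; split_ifs <;> simp

lemma card_pendants_le : #(pendants Γ) ≤ #(Γ.edgeFinset \ innerEdges Γ) := by
  refine card_le_card_of_forall_subsingleton (fun v e ↦ v ∈ e) (fun v hv ↦ ?_) (fun e he ↦ ?_)
  · obtain ⟨hdeg, w, hvw, -⟩ := (mem_filter.1 hv).2
    refine ⟨s(v, w), mem_sdiff.2 ⟨mem_edgeFinset.2 hvw, fun hin ↦ ?_⟩, Sym2.mem_mk_left v w⟩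
    have := (mem_innerEdges.1 hin).2 v (Sym2.mem_mk_left v w)
    lia
  · rintro x ⟨hx, hxe⟩ y ⟨hy, hye⟩
    by_contra hxy
    obtain ⟨hdegx, w, hxw, hdegw⟩ := (mem_filter.1 hx).2
    have hdegy := (mem_filter.1 hy).2.1
    rw [(Sym2.mem_and_mem_iff hxy).1 ⟨hxe, hye⟩, mem_sdiff, mem_edgeFinset] at he
    obtain ⟨z, hz⟩ := degree_eq_one_iff_existsUnique_adj.1 hdegx
    have hwy : w = y := (hz.2 w hxw).trans (hz.2 y he.1).symm
    rw [hwy] at hdegw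
    lia

lemma card_deepVertices_add_card_pendants_le :
    #(deepVertices Γ) + #(pendants Γ) ≤ #Γ.edgeFinset := by
  have hinner : innerEdges Γ ⊆ Γ.edgeFinset := fun e he ↦
    mem_edgeFinset.2 (mem_innerEdges.1 he).1
  calc #(deepVertices Γ) + #(pendants Γ)
      ≤ #(innerEdges Γ) + #(Γ.edgeFinset \ innerEdges Γ) :=
        add_le_add card_deepVertices_le card_pendants_le
    _ = #Γ.edgeFinset := by rw [add_comm, card_sdiff_add_card_eq_card hinner]

/-- The sum of the squares of the degrees. -/
noncomputable def energy (Γ : SimpleGraph V) : ℕ :=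
  ∑ v, Γ.degree v ^ 2

lemma energy_eq_sum [DecidableRel Γ.Adj] : energy Γ = ∑ v, Γ.degree v ^ 2 := by
  rw [energy]
  congr!

omit [Fintype V] in
lemma degree_deleteEdges_singleton (huv : Γ.Adj u v) (w : V) [Fintype (Γ.neighborSet w)]
    [Fintype ((Γ.deleteEdges {s(u, v)}).neighborSet w)] :
    (Γ.deleteEdges {s(u, v)}).degree w + (if w ∈ s(u, v) then 1 else 0) = Γ.degree w := by
  have herase : (Γ.deleteEdges {s(u, v)}).incidenceFinset w =
      (Γ.incidenceFinset w).erase s(u, v) := by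
    ext e
    simp only [mem_incidenceFinset, incidenceSet, mem_erase, edgeSet_deleteEdges, Set.mem_ofPred_eq,
      Set.mem_sdiff, Set.mem_singleton_iff]
    tauto
  rw [← card_incidenceFinset_eq_degree, ← card_incidenceFinset_eq_degree, herase]
  split_ifs with hw
  · exact card_erase_add_one ((Γ.mem_incidenceFinset w _).2 ⟨huv, hw⟩)
  · rw [erase_eq_of_notMem fun h ↦ hw (Γ.mem_incidenceFinset w _ |>.1 h).2, add_zero]

lemma energy_deleteEdges_singleton (huv : Γ.Adj u v) :
    energy (Γ.deleteEdges {s(u, v)}) + 2 * (Γ.degree u + Γ.degree v) = energy Γ + 2 := by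
  have hpair : ({w | w ∈ s(u, v)} : Finset V) = {u, v} := by ext; simp
  have hsum (g : V → ℕ) : ∑ w, (if w ∈ s(u, v) then g w else 0) = g u + g v := by
    rw [← sum_filter, hpair, sum_pair huv.ne]
  calc energy (Γ.deleteEdges {s(u, v)}) + 2 * (Γ.degree u + Γ.degree v)
      = ∑ w, ((Γ.deleteEdges {s(u, v)}).degree w ^ 2 +
          if w ∈ s(u, v) then 2 * Γ.degree w else 0) := by
        rw [sum_add_distrib, hsum, energy_eq_sum, mul_add]
    _ = ∑ w, (Γ.degree w ^ 2 + if w ∈ s(u, v) then 1 else 0) := by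
        refine sum_congr rfl fun w _ ↦ ?_
        rw [← degree_deleteEdges_singleton huv w]
        split_ifs <;> ring
    _ = energy Γ + 2 := by rw [sum_add_distrib, hsum, energy_eq_sum]

lemma card_incidenceFinset_union (huv : Γ.Adj u v) :
    #(Γ.incidenceFinset u ∪ Γ.incidenceFinset v) + 1 = Γ.degree u + Γ.degree v := by
  have hinter : Γ.incidenceFinset u ∩ Γ.incidenceFinset v = {s(u, v)} := by
    rw [← coe_inj, coe_inter, coe_incidenceFinset, coe_incidenceFinset,
      Γ.incidenceSet_inter_incidenceSet_of_adj huv, coe_singleton]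
  rw [← card_incidenceFinset_eq_degree, ← card_incidenceFinset_eq_degree,
    ← card_union_add_card_inter, hinter, card_singleton]

lemma degree_deleteEdges_singleton_of_notMem (huv : Γ.Adj u v) {e : Sym2 V} (he : e ∈ Γ.edgeSet)
    (hinc : e ∉ Γ.incidenceFinset u ∪ Γ.incidenceFinset v) {x : V} (hx : x ∈ e) :
    (Γ.deleteEdges {s(u, v)}).degree x = Γ.degree x := by
  have hxuv : x ∉ s(u, v) := fun h ↦ hinc (by
    rcases Sym2.mem_iff.1 h with rfl | rfl
    · exact mem_union_left _ ((Γ.mem_incidenceFinset _ _).2 ⟨he, hx⟩)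
    · exact mem_union_right _ ((Γ.mem_incidenceFinset _ _).2 ⟨he, hx⟩))
  simpa [hxuv] using degree_deleteEdges_singleton huv x

lemma innerEdges_sdiff_subset (huv : Γ.Adj u v) :
    innerEdges Γ \ (Γ.incidenceFinset u ∪ Γ.incidenceFinset v) ⊆
      innerEdges (Γ.deleteEdges {s(u, v)}) := by
  intro e he
  obtain ⟨hinner, hinc⟩ := mem_sdiff.1 he
  obtain ⟨hedge, hdeg⟩ := mem_innerEdges.1 hinner
  refine mem_innerEdges.2 ⟨?_, fun x hx ↦ ?_⟩
  · refine (Γ.edgeSet_deleteEdges _).ge ⟨hedge, fun h ↦ hinc ?_⟩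
    rw [Set.mem_singleton_iff.1 h]
    exact mem_union_left _ ((Γ.mem_incidenceFinset _ _).2 ⟨huv, Sym2.mem_mk_left u v⟩)
  · rw [← hdeg x hx, ← degree_deleteEdges_singleton_of_notMem huv hedge hinc hx]

lemma innerEdges_deleteEdges_subset (huv : Γ.Adj u v) (hu : Γ.degree u = 2) (hv : Γ.degree v = 2) :
    innerEdges (Γ.deleteEdges {s(u, v)}) ⊆
      innerEdges Γ \ (Γ.incidenceFinset u ∪ Γ.incidenceFinset v) := by
  intro e he
  obtain ⟨hedge, hdeg⟩ := mem_innerEdges.1 he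
  rw [edgeSet_deleteEdges] at hedge
  have hinc : e ∉ Γ.incidenceFinset u ∪ Γ.incidenceFinset v := fun h ↦ by
    rcases mem_union.1 h with h | h
    · have := hdeg u (Γ.mem_incidenceFinset _ _ |>.1 h).2
      have := degree_deleteEdges_singleton huv u
      simp_all
    · have := hdeg v (Γ.mem_incidenceFinset _ _ |>.1 h).2
      have := degree_deleteEdges_singleton huv v
      simp_all
  refine mem_sdiff.2 ⟨mem_innerEdges.2 ⟨hedge.1, fun x hx ↦ ?_⟩, hinc⟩
  rw [← hdeg x hx, ← degree_deleteEdges_singleton_of_notMem huv hedge.1 hinc hx]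

lemma card_innerEdges_deleteEdges (huv : Γ.Adj u v) (hu : IsInner Γ u) (hv : IsInner Γ v) :
    #(innerEdges (Γ.deleteEdges {s(u, v)})) + 3 ≤ #(innerEdges Γ) := by
  have hsub := card_le_card (innerEdges_deleteEdges_subset huv hu.1 hv.1)
  have := card_sdiff_add_card_eq_card (union_subset (incidenceFinset_subset_innerEdges hu)
    (incidenceFinset_subset_innerEdges hv))
  have := card_incidenceFinset_union huv
  rw [hu.1, hv.1] at this
  lia

lemma isInner_of_card_innerEdges_deleteEdges (huv : Γ.Adj u v)
    (hsum : Γ.degree u + Γ.degree v = 4)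
    (hcard : #(innerEdges (Γ.deleteEdges {s(u, v)})) + 3 ≤ #(innerEdges Γ)) : IsInner Γ u := by
  set B := Γ.incidenceFinset u ∪ Γ.incidenceFinset v
  have hBcard : #B + 1 = 4 := hsum ▸ card_incidenceFinset_union huv
  have hBinner : innerEdges Γ ∩ B = B := by
    refine eq_of_subset_of_card_le inter_subset_right ?_
    have := card_le_card (innerEdges_sdiff_subset huv)
    have := card_sdiff_add_card_inter (innerEdges Γ) B
    lia
  have hdeg {w : V} (huw : Γ.Adj u w) : ∀ x ∈ s(u, w), Γ.degree x = 2 := by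
    have : s(u, w) ∈ B :=
      mem_union_left _ ((Γ.mem_incidenceFinset _ _).2 ⟨huw, Sym2.mem_mk_left u w⟩)
    exact (mem_innerEdges.1 (inter_eq_right.1 hBinner this)).2
  exact ⟨hdeg huv u (Sym2.mem_mk_left u v), fun w huw ↦ hdeg huw w (Sym2.mem_mk_right u w)⟩

end LightEdges

section Colourings

open Finset Function

variable {V α : Type*} {G : SimpleGraph V} {c : Sym2 V → α}

/-- The graph formed by the edges of `G` that have colour `a`. -/
def colourClass (G : SimpleGraph V) (c : Sym2 V → α) (a : α) : SimpleGraph V :=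
  G.deleteEdges {e | c e ≠ a}

lemma colourClass_adj {a : α} {x y : V} :
    (colourClass G c a).Adj x y ↔ G.Adj x y ∧ c s(x, y) = a := by
  simp [colourClass]

lemma mem_edgeSet_colourClass {a : α} {e : Sym2 V} :
    e ∈ (colourClass G c a).edgeSet ↔ e ∈ G.edgeSet ∧ c e = a := by
  simp [colourClass, edgeSet_deleteEdges]

lemma arrows_iff {W : Type*} {F : SimpleGraph W} {r : ℕ} :
    Arrows G F r ↔ ∀ c : Sym2 V → Fin r, ∃ a, F ⊑ colourClass G c a := by
  refine forall_congr' fun c ↦ exists_congr fun a ↦ ⟨?_, ?_⟩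
  · rintro ⟨f, hinj, hadj⟩
    exact ⟨⟨⟨f, fun {x y} h ↦ colourClass_adj.2 (hadj x y h)⟩, hinj⟩⟩
  · rintro ⟨φ⟩
    exact ⟨φ, φ.injective, fun x y h ↦ colourClass_adj.1 (φ.toHom.map_adj h)⟩

lemma not_arrows_iff {W : Type*} {F : SimpleGraph W} {r : ℕ} :
    ¬ Arrows G F r ↔ ∃ c : Sym2 V → Fin r, ∀ a, F.Free (colourClass G c a) := by
  simp only [arrows_iff, not_forall, not_exists, Free]

section Update

variable [DecidableEq (Sym2 V)] {e : Sym2 V} {b : α}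

lemma colourClass_update_of_ne {i : α} (hi : i ≠ c e) (hib : i ≠ b) :
    colourClass G (update c e b) i = colourClass G c i := by
  refine edgeSet_injective (Set.ext fun e' ↦ ?_)
  obtain rfl | he := eq_or_ne e' e
  · simp [mem_edgeSet_colourClass, hi.symm, hib.symm]
  · simp [mem_edgeSet_colourClass, he]

lemma colourClass_update_self (hb : b ≠ c e) :
    colourClass G (update c e b) (c e) = (colourClass G c (c e)).deleteEdges {e} := by
  refine edgeSet_injective (Set.ext fun e' ↦ ?_)
  obtain rfl | he := eq_or_ne e' e
  · simp [mem_edgeSet_colourClass, edgeSet_deleteEdges, hb]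
  · simp [mem_edgeSet_colourClass, edgeSet_deleteEdges, he]

lemma deleteEdges_colourClass_update (hb : b ≠ c e) :
    (colourClass G (update c e b) b).deleteEdges {e} = colourClass G c b := by
  refine edgeSet_injective (Set.ext fun e' ↦ ?_)
  obtain rfl | he := eq_or_ne e' e
  · simp [mem_edgeSet_colourClass, edgeSet_deleteEdges, hb.symm]
  · simp [mem_edgeSet_colourClass, edgeSet_deleteEdges, he]

lemma sum_colourClass_update [Fintype α] (F : SimpleGraph V → ℕ) (hb : b ≠ c e) :
    ∑ i, F (colourClass G c i) + F ((colourClass G c (c e)).deleteEdges {e}) +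
        F (colourClass G (update c e b) b) =
      ∑ i, F (colourClass G (update c e b) i) + F (colourClass G c (c e)) +
        F ((colourClass G (update c e b) b).deleteEdges {e}) := by
  classical
  have hsplit (c' : Sym2 V → α) : ∑ i, F (colourClass G c' i) =
      F (colourClass G c' (c e)) + F (colourClass G c' b) +
        ∑ i ∈ univ \ {c e, b}, F (colourClass G c' i) := by
    rw [← sum_pair (f := fun i ↦ F (colourClass G c' i)) hb.symm, add_comm,
      sum_sdiff (subset_univ _)]
  have hrest : ∑ i ∈ univ \ {c e, b}, F (colourClass G (update c e b) i) =
      ∑ i ∈ univ \ {c e, b}, F (colourClass G c i) := by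
    refine sum_congr rfl fun i hi ↦ ?_
    simp only [mem_sdiff, mem_univ, true_and, mem_insert, mem_singleton, not_or] at hi
    rw [colourClass_update_of_ne hi.1 hi.2]
  rw [hsplit c, hsplit (update c e b), hrest, colourClass_update_self hb,
    deleteEdges_colourClass_update hb]
  ring

end Update

end Colourings

section Optimal

open Finset Function Classical

variable {V α : Type*} [Fintype V] [Fintype α] {G : SimpleGraph V} {c : Sym2 V → α} {u v : V}

/-- `c` minimises the sum of the squares of all colour degrees and, subject to that, the number of
edges whose ends both have degree two in the colour of the edge. -/
def IsOptimal (G : SimpleGraph V) (c : Sym2 V → α) : Prop :=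
  ∀ c' : Sym2 V → α,
    toLex (∑ i, energy (colourClass G c i), ∑ i, #(innerEdges (colourClass G c i))) ≤
      toLex (∑ i, energy (colourClass G c' i), ∑ i, #(innerEdges (colourClass G c' i)))

lemma exists_isOptimal [Nonempty α] (G : SimpleGraph V) : ∃ c : Sym2 V → α, IsOptimal G c :=
  Finite.exists_min fun c : Sym2 V → α ↦
    toLex (∑ i, energy (colourClass G c i), ∑ i, #(innerEdges (colourClass G c i)))

lemma sum_card_edgeFinset_colourClass (G : SimpleGraph V) (c : Sym2 V → α) :
    ∑ i, #(colourClass G c i).edgeFinset = #G.edgeFinset := by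
  rw [card_eq_sum_card_fiberwise (f := c) (t := univ) fun _ _ ↦ mem_univ _]
  refine sum_congr rfl fun i _ ↦ congrArg card (ext fun e ↦ ?_)
  rw [mem_edgeFinset, mem_filter, mem_edgeFinset, mem_edgeSet_colourClass]

lemma sum_degree_colourClass (G : SimpleGraph V) (c : Sym2 V → α) (v : V) :
    ∑ i, (colourClass G c i).degree v = G.degree v := by
  rw [← card_incidenceFinset_eq_degree,
    card_eq_sum_card_fiberwise (f := c) (t := univ) fun _ _ ↦ mem_univ _]
  refine sum_congr rfl fun i _ ↦ ?_
  rw [← card_incidenceFinset_eq_degree]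
  refine congrArg card (ext fun e ↦ ?_)
  simp only [mem_incidenceFinset, incidenceSet, mem_filter, Set.mem_ofPred_eq,
    mem_edgeSet_colourClass]
  tauto

omit [Fintype α] in
lemma degree_colourClass_update (huv : G.Adj u v) {b : α} (hb : b ≠ c s(u, v)) (w : V) :
    (colourClass G (update c s(u, v) b) b).degree w =
      (colourClass G c b).degree w + if w ∈ s(u, v) then 1 else 0 := by
  have hadj : (colourClass G (update c s(u, v) b) b).Adj u v :=
    colourClass_adj.2 ⟨huv, update_self ..⟩
  rw [← degree_deleteEdges_singleton hadj w]
  congr! 2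
  exact deleteEdges_colourClass_update hb

lemma sum_energy_update (huv : G.Adj u v) {b : α} (hb : b ≠ c s(u, v)) :
    ∑ i, energy (colourClass G (update c s(u, v) b) i) +
        2 * ((colourClass G c (c s(u, v))).degree u + (colourClass G c (c s(u, v))).degree v) =
      ∑ i, energy (colourClass G c i) +
        2 * ((colourClass G c b).degree u + (colourClass G c b).degree v + 2) := by
  have hadj : (colourClass G (update c s(u, v) b) b).Adj u v :=
    colourClass_adj.2 ⟨huv, update_self ..⟩
  have hsum := sum_colourClass_update (G := G) energy hb
  have hold := energy_deleteEdges_singleton (colourClass_adj.2 ⟨huv, rfl⟩ :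
    (colourClass G c (c s(u, v))).Adj u v)
  have hnew := energy_deleteEdges_singleton hadj
  have hu := degree_colourClass_update huv hb u
  have hv := degree_colourClass_update huv hb v
  simp only [Sym2.mem_mk_left, Sym2.mem_mk_right, if_true] at hu hv
  lia

namespace IsOptimal

lemma degree_add_degree_le (hc : IsOptimal G c) (huv : G.Adj u v) (b : α) :
    (colourClass G c (c s(u, v))).degree u + (colourClass G c (c s(u, v))).degree v ≤
      (colourClass G c b).degree u + (colourClass G c b).degree v + 2 := by
  obtain rfl | hb := eq_or_ne b (c s(u, v))
  · lia
  have := sum_energy_update huv hb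
  have := (Prod.Lex.toLex_le_toLex'.1 (hc (update c s(u, v) b))).1
  lia

/-- By `hdeg`, moving `uv` to the colour `b` leaves the energy unchanged. -/
lemma card_innerEdges_le (hc : IsOptimal G c) (huv : G.Adj u v) {b : α} (hb : b ≠ c s(u, v))
    (hdeg : (colourClass G c (c s(u, v))).degree u + (colourClass G c (c s(u, v))).degree v =
      (colourClass G c b).degree u + (colourClass G c b).degree v + 2) :
    #(innerEdges (colourClass G c (c s(u, v)))) +
        #(innerEdges ((colourClass G (update c s(u, v) b) b).deleteEdges {s(u, v)})) ≤
      #(innerEdges ((colourClass G c (c s(u, v))).deleteEdges {s(u, v)})) +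
        #(innerEdges (colourClass G (update c s(u, v) b) b)) := by
  have henergy := sum_energy_update huv hb
  have hinner := (Prod.Lex.toLex_le_toLex'.1 (hc (update c s(u, v) b))).2 (by lia)
  have := sum_colourClass_update (G := G) (fun Γ ↦ #(innerEdges Γ)) hb
  simp only at hinner
  lia

end IsOptimal

omit [Fintype V] in
lemma balanced_of_sum_le {x : α → ℕ} {a : α} (hsum : ∑ b, x b ≤ 2 * Fintype.card α + 2)
    (hx : ∀ b, x a ≤ x b + 2) : x a ≤ 4 ∧ (x a = 4 → ∀ b ≠ a, x b = 2) := by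
  have hcard : #(univ.erase a) + 1 = Fintype.card α := card_erase_add_one (mem_univ a)
  have hsplit : ∑ b ∈ univ.erase a, x b + x a = ∑ b, x b := sum_erase_add _ _ (mem_univ a)
  have hle : #(univ.erase a) * x a ≤ ∑ b ∈ univ.erase a, x b + #(univ.erase a) * 2 := by
    rw [← smul_eq_mul, ← smul_eq_mul, ← sum_const, ← sum_const, ← sum_add_distrib]
    exact sum_le_sum fun b _ ↦ hx b
  refine ⟨by nlinarith, fun h4 b hb ↦ ?_⟩
  have hall : ∑ b ∈ univ.erase a, 2 = ∑ b ∈ univ.erase a, x b := by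
    refine le_antisymm (sum_le_sum fun b _ ↦ by have := hx b; lia) ?_
    rw [sum_const, smul_eq_mul]
    lia
  exact ((sum_eq_sum_iff_of_le fun b _ ↦ by have := hx b; lia).1 hall b
    (mem_erase.2 ⟨hb, mem_univ b⟩)).symm

namespace IsOptimal

lemma degree_add_degree_balanced (hc : IsOptimal G c) (hG : ∀ v, G.degree v ≤ Fintype.card α + 1)
    (huv : G.Adj u v) :
    (colourClass G c (c s(u, v))).degree u + (colourClass G c (c s(u, v))).degree v ≤ 4 ∧
      ((colourClass G c (c s(u, v))).degree u + (colourClass G c (c s(u, v))).degree v = 4 →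
        ∀ b ≠ c s(u, v), (colourClass G c b).degree u + (colourClass G c b).degree v = 2) := by
  refine balanced_of_sum_le
    (x := fun b ↦ (colourClass G c b).degree u + (colourClass G c b).degree v) ?_
    (hc.degree_add_degree_le huv)
  rw [sum_add_distrib, sum_degree_colourClass, sum_degree_colourClass]
  have := hG u
  have := hG v
  lia

lemma mem_pendants (hc : IsOptimal G c) (hG : ∀ v, G.degree v ≤ Fintype.card α + 1) {a b : α}
    (hb : b ≠ a) (hu : u ∈ deepVertices (colourClass G c a)) :
    u ∈ pendants (colourClass G c b) := by
  obtain ⟨hinner, v, huva, hinnerv⟩ := (mem_filter.1 hu).2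
  obtain ⟨huv, rfl⟩ := colourClass_adj.1 huva
  have hfour : (colourClass G c (c s(u, v))).degree u +
      (colourClass G c (c s(u, v))).degree v = 4 := by rw [hinner.1, hinnerv.1]
  have htwo := (hc.degree_add_degree_balanced hG huv).2 hfour b hb
  have hnew := degree_colourClass_update huv hb
  have hmoved : IsInner (colourClass G (update c s(u, v) b) b) u := by
    refine isInner_of_card_innerEdges_deleteEdges (v := v)
      (colourClass_adj.2 ⟨huv, update_self ..⟩) ?_ ?_
    · rw [hnew u, hnew v, if_pos (Sym2.mem_mk_left u v), if_pos (Sym2.mem_mk_right u v)]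
      lia
    · have := hc.card_innerEdges_le huv hb (by lia)
      have := card_innerEdges_deleteEdges huva hinner hinnerv
      lia
  have hdeg : (colourClass G c b).degree u = 1 := by
    have := hnew u
    rw [hmoved.1, if_pos (Sym2.mem_mk_left u v)] at this
    lia
  obtain ⟨w, huw⟩ := (degree_pos_iff_exists_adj _ u).1 (hdeg ▸ one_pos)
  have hwv : w ≠ v := fun h ↦ hb (h ▸ (colourClass_adj.1 huw).2.symm)
  have hw : w ∉ s(u, v) := fun h ↦ (Sym2.mem_iff.1 h).elim huw.ne' hwv
  refine mem_filter.2 ⟨mem_univ u, hdeg, w, huw, ?_⟩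
  have huw' : (colourClass G (update c s(u, v) b) b).Adj u w :=
    deleteEdges_le _ ((deleteEdges_colourClass_update hb).ge huw)
  have := hnew w
  rwa [if_neg hw, hmoved.2 w huw', add_zero, eq_comm] at this

lemma disjoint_deepVertices (hc : IsOptimal G c) (hG : ∀ v, G.degree v ≤ Fintype.card α + 1)
    {a b : α} (hab : a ≠ b) :
    Disjoint (deepVertices (colourClass G c a)) (deepVertices (colourClass G c b)) :=
  disjoint_left.2 fun _ ha hb ↦ absurd
    ((mem_filter.1 (hc.mem_pendants hG hab.symm ha)).2.1.symm.trans (mem_filter.1 hb).2.1.1)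
    (by decide)

lemma sum_card_deepVertices_le (hc : IsOptimal G c) (hG : ∀ v, G.degree v ≤ Fintype.card α + 1)
    (b : α) :
    ∑ a, #(deepVertices (colourClass G c a)) ≤ #(colourClass G c b).edgeFinset := by
  have hpendants : (univ.erase b).biUnion (fun a ↦ deepVertices (colourClass G c a)) ⊆
      pendants (colourClass G c b) :=
    biUnion_subset.2 fun a ha _ hu ↦ hc.mem_pendants hG (ne_of_mem_erase ha).symm hu
  calc ∑ a, #(deepVertices (colourClass G c a))
      = #(deepVertices (colourClass G c b)) +
          #((univ.erase b).biUnion fun a ↦ deepVertices (colourClass G c a)) := by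
        rw [card_biUnion fun _ _ _ _ ↦ hc.disjoint_deepVertices hG,
          add_sum_erase _ (fun a ↦ #(deepVertices (colourClass G c a))) (mem_univ b)]
    _ ≤ #(deepVertices (colourClass G c b)) + #(pendants (colourClass G c b)) :=
        Nat.add_le_add_left (card_le_card hpendants) _
    _ ≤ #(colourClass G c b).edgeFinset := card_deepVertices_add_card_pendants_le

lemma card_mul_sum_card_deepVertices_le (hc : IsOptimal G c)
    (hG : ∀ v, G.degree v ≤ Fintype.card α + 1) :
    Fintype.card α * ∑ a, #(deepVertices (colourClass G c a)) ≤ #G.edgeFinset := by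
  rw [← sum_card_edgeFinset_colourClass G c, ← smul_eq_mul, ← card_univ]
  exact card_nsmul_le_sum _ _ _ fun b _ ↦ hc.sum_card_deepVertices_le hG b

end IsOptimal

omit [Fintype V] in
lemma colourClass_deleteEdges_biUnion_le {Z : α → Finset (Sym2 V)} (a : α) :
    colourClass (G.deleteEdges (univ.biUnion Z)) c a ≤ (colourClass G c a).deleteEdges (Z a) := by
  intro x y hxy
  obtain ⟨hG, hca⟩ := colourClass_adj.1 hxy
  obtain ⟨hadj, hZ⟩ := deleteEdges_adj.1 hG
  exact deleteEdges_adj.2 ⟨colourClass_adj.2 ⟨hadj, hca⟩, fun h ↦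
    hZ (mem_biUnion.2 ⟨a, mem_univ a, h⟩)⟩

lemma exists_free_colouring_deleteEdges [Nonempty α]
    (hG : ∀ v, G.degree v ≤ Fintype.card α + 1) {m : ℕ} (hm : 5 ≤ m) :
    ∃ Z : Finset (Sym2 V), Fintype.card α * (#Z * (m - 3)) ≤ 2 * #G.edgeFinset ∧
      ∃ c : Sym2 V → α, ∀ a, (pathGraph (m + 1)).Free (colourClass (G.deleteEdges Z) c a) := by
  obtain ⟨c, hc⟩ := exists_isOptimal (α := α) G
  have hlight (a : α) : ∀ x y, (colourClass G c a).Adj x y →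
      (colourClass G c a).degree x + (colourClass G c a).degree y ≤ 4 := by
    rintro x y hxy
    obtain ⟨hadj, rfl⟩ := colourClass_adj.1 hxy
    exact (hc.degree_add_degree_balanced hG hadj).1
  choose Z hZ hfree using fun a ↦ exists_edge_cut_of_degree_add_degree_le (hlight a) hm
  refine ⟨univ.biUnion Z, ?_, c, fun a h ↦
    hfree a (h.mono_right (colourClass_deleteEdges_biUnion_le a))⟩
  calc Fintype.card α * (#(univ.biUnion Z) * (m - 3))
      ≤ Fintype.card α * ((∑ a, #(Z a)) * (m - 3)) := by gcongr; exact card_biUnion_le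
    _ ≤ Fintype.card α * (2 * ∑ a, #(deepVertices (colourClass G c a))) := by
        rw [sum_mul, mul_sum univ _ 2]
        exact Nat.mul_le_mul_left _ (sum_le_sum fun a _ ↦ hZ a)
    _ ≤ 2 * #G.edgeFinset := by
        have := hc.card_mul_sum_card_deepVertices_le hG
        lia

end Optimal

section Extension

open Finset

variable {V : Type*} {G H : SimpleGraph V} {S : Finset V} {K m n t T : ℕ}

lemma exists_card_fiber_le {ι β : Type*} [Fintype ι] [DecidableEq ι] [Nonempty ι] {Z : Finset β}
    {size : ι → ℕ} (hZ : #Z ≤ ∑ i, size i) :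
    ∃ g : β → ι, ∀ i, #{e ∈ Z | g e = i} ≤ size i := by
  classical
  obtain ⟨φ⟩ : Nonempty (Z ↪ Σ i, Fin (size i)) :=
    Function.Embedding.nonempty_of_card_le (by simpa using hZ)
  refine ⟨fun e ↦ if he : e ∈ Z then (φ ⟨e, he⟩).1 else Classical.arbitrary ι, fun i ↦ ?_⟩
  rw [← Fintype.card_fin (size i), ← card_univ]
  refine card_le_card_of_forall_subsingleton (fun e p ↦ ∃ he, φ ⟨e, he⟩ = ⟨i, p⟩) ?_ ?_
  · intro e he
    obtain ⟨heZ, hei⟩ := mem_filter.1 he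
    simp only [dif_pos heZ] at hei
    subst hei
    exact ⟨(φ ⟨e, heZ⟩).2, mem_univ _, heZ, rfl⟩
  · rintro p - e ⟨-, he, hep⟩ e' ⟨-, he', hep'⟩
    exact congrArg Subtype.val (φ.injective (hep.trans hep'.symm))

/-- The new colour takes the edges that meet `S`, and the edges of `Z` are shared out among all
colours: `T` to the new colour and `t` to each old one. -/
lemma not_arrows_pathGraph_succ {Z : Finset (Sym2 V)} (hH : ¬ Arrows H (pathGraph (m + 1)) K)
    (hS : ((G \ H).deleteEdges Z).IsVertexCover S) (hZ : #Z ≤ K * t + T)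
    (hm : (t + 1) * m < n) (hcard : #S + T < n / 2) :
    ¬ Arrows G (pathGraph n) (K + 1) := by
  classical
  obtain ⟨c, hc⟩ := not_arrows_iff.1 hH
  obtain ⟨g, hg⟩ := exists_card_fiber_le (Z := Z) (ι := Fin (K + 1))
    (size := Fin.lastCases T fun _ ↦ t) (by simpa [Fin.sum_univ_castSucc] using hZ)
  have hlast := hg (Fin.last K)
  have hcastSucc (a : Fin K) := hg a.castSucc
  simp only [Fin.lastCases_last] at hlast
  simp only [Fin.lastCases_castSucc] at hcastSucc
  refine not_arrows_iff.2 ⟨fun e ↦ if e ∈ H.edgeSet then (c e).castSucc else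
    if e ∈ Z then g e else Fin.last K, Fin.lastCases ?_ fun a ↦ ?_⟩
  · refine free_pathGraph_of_isVertexCover (S := S) (Y := {e ∈ Z | g e = Fin.last K})
      (fun x y hxy ↦ ?_) (by lia)
    obtain ⟨hadj, hY⟩ := deleteEdges_adj.1 hxy
    obtain ⟨hxyG, hcol⟩ := colourClass_adj.1 hadj
    split_ifs at hcol with hxyH hxyZ
    · exact absurd hcol (Fin.castSucc_ne_last _)
    · exact absurd (mem_filter.2 ⟨hxyZ, hcol⟩) hY
    · exact hS (deleteEdges_adj.2 ⟨⟨hxyG, hxyH⟩, hxyZ⟩)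
  · obtain ⟨l, rfl⟩ := Nat.exists_eq_add_one.2 (show 0 < n by lia)
    refine free_pathGraph_of_free_deleteEdges (fun h ↦ hc a (h.mono_right ?_)) (hcastSucc a)
      (Nat.lt_succ_iff.1 hm)
    intro x y hxy
    obtain ⟨hadj, hY⟩ := deleteEdges_adj.1 hxy
    obtain ⟨-, hcol⟩ := colourClass_adj.1 hadj
    split_ifs at hcol with hxyH hxyZ
    · exact colourClass_adj.2 ⟨hxyH, Fin.castSucc_injective _ hcol⟩
    · exact absurd (mem_filter.2 ⟨hxyZ, hcol⟩) hY
    · exact absurd hcol.symm (Fin.castSucc_ne_last _)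

end Extension

section Induction

open Finset Classical

variable {V : Type*} [Fintype V] {G H : SimpleGraph V} {K n : ℕ}

lemma exists_isVertexCover_sdiff (G : SimpleGraph V) (d s : ℕ) :
    ∃ H ≤ G, ∃ S : Finset V, #S ≤ s ∧ (G \ H).IsVertexCover S ∧
      (#H.edgeFinset + d * s ≤ #G.edgeFinset ∨ ∀ v, H.degree v < d) := by
  induction s with
  | zero => exact ⟨G, le_rfl, ∅, by simp, by simp, by simp⟩
  | succ s ih =>
    obtain ⟨H, hHG, S, hS, hcover, hH⟩ := ih
    by_cases hdeg : ∀ v, H.degree v < d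
    · exact ⟨H, hHG, S, by lia, hcover, .inr hdeg⟩
    · push Not at hdeg
      obtain ⟨v, hv⟩ := hdeg
      refine ⟨H.deleteIncidenceSet v, (H.deleteIncidenceSet_le v).trans hHG, insert v S,
        (card_insert_le v S).trans (by lia), fun x y hxy ↦ ?_, .inl ?_⟩
      · obtain ⟨hxyG, hxyH⟩ := hxy
        rw [coe_insert, Set.mem_insert_iff, Set.mem_insert_iff]
        by_cases hxyH' : H.Adj x y
        · rw [deleteIncidenceSet_adj] at hxyH
          tauto
        · exact (hcover ⟨hxyG, hxyH'⟩).imp .inr .inr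
      · have := hH.resolve_right fun h ↦ (h v).not_ge hv
        have := H.card_edgeFinset_deleteIncidenceSet v
        have := H.degree_le_card_edgeFinset v
        convert (show #(H.deleteIncidenceSet v).edgeFinset + d * (s + 1) ≤ #G.edgeFinset by lia)

/-- At most `5 (K + 5) (K + 2) / (2 (K + 1))` edges are deleted from `H`: each of the `K + 1`
colours used on `H` gets three of them back, and the last colour absorbs the bounded surplus. -/
lemma not_arrows_pathGraph_of_degree_le {S : Finset V} (hn : 80 ≤ n)
    (hdeg : ∀ v, H.degree v ≤ K + 2) (hH : 4 * #H.edgeFinset ≤ (K + 5) * (K + 2) * n)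
    (hcover : (G \ H).IsVertexCover S) (hS : #S + 24 < n / 2) :
    ¬ Arrows G (pathGraph n) (K + 2) := by
  obtain ⟨Z, hZ, hfree⟩ := exists_free_colouring_deleteEdges (α := Fin (K + 1)) (G := H)
    (by simpa using hdeg) (m := (n - 1) / 4) (by lia)
  rw [Fintype.card_fin] at hZ
  have hlen : n ≤ 5 * ((n - 1) / 4 - 3) := by lia
  have hcardZ : #Z ≤ (K + 1) * 3 + 24 := by
    have hpos : 0 < (n - 1) / 4 - 3 := by lia
    have hscaled : 2 * (K + 1) * #Z ≤ 5 * ((K + 5) * (K + 2)) := by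
      refine Nat.le_of_mul_le_mul_right ?_ hpos
      nlinarith [Nat.mul_le_mul_left ((K + 5) * (K + 2)) hlen]
    by_contra! hlt
    nlinarith [Nat.mul_le_mul_left (2 * (K + 1)) hlt]
  refine not_arrows_pathGraph_succ (not_arrows_iff.2 hfree) (fun x y hxy ↦ ?_) hcardZ (by lia) hS
  obtain ⟨⟨hG, hHZ⟩, hxyZ⟩ := deleteEdges_adj.1 hxy
  exact hcover ⟨hG, fun hxyH ↦ hHZ (deleteEdges_adj.2 ⟨hxyH, hxyZ⟩)⟩

lemma not_arrows_pathGraph_one (hG : #G.edgeFinset + 1 < n) : ¬ Arrows G (pathGraph n) 1 := by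
  obtain ⟨l, rfl⟩ := Nat.exists_eq_add_one.2 (show 0 < n by lia)
  refine not_arrows_iff.2 ⟨0, fun a ↦ free_pathGraph_of_free_deleteEdges (Y := G.edgeFinset)
    (m := 1) (fun h ↦ ?_) le_rfl (by lia)⟩
  obtain ⟨f, hf⟩ := pathGraph_isContained_iff.1 h
  obtain ⟨hadj, hnot⟩ := deleteEdges_adj.1 (hf.2 0 one_pos)
  exact hnot (mem_edgeFinset.2 (colourClass_adj.1 hadj).1)

theorem not_arrows_pathGraph
    (hG : 4 * #G.edgeFinset + 200 * (K + 1) ^ 2 ≤ (K + 4) * (K + 1) * n) :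
    ¬ Arrows G (pathGraph n) (K + 1) := by
  induction K generalizing G with
  | zero => exact not_arrows_pathGraph_one (by lia)
  | succ K ih =>
    have hn : 80 ≤ n := by
      by_contra! hlt
      nlinarith
    obtain ⟨H, hHG, S, hS, hcover, hH | hdeg⟩ := exists_isVertexCover_sdiff G (K + 3) (n / 2 - 25)
    · have hhalf : n ≤ 2 * (n / 2 - 25) + 51 := by lia
      obtain ⟨m, rfl⟩ := Nat.exists_eq_add_one.2 (show 0 < n by lia)
      refine not_arrows_pathGraph_succ (t := 0) (T := 0) (Z := ∅) (ih (G := H) ?_) (by simpa)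
        (by simp) (by lia) (by lia)
      nlinarith
    · have hle := card_le_card (edgeFinset_mono hHG)
      refine not_arrows_pathGraph_of_degree_le hn (fun v ↦ Nat.lt_succ_iff.1 (hdeg v)) ?_ hcover
        (by lia)
      nlinarith

end Induction

section Existence

open Finset

lemma exists_monochromatic_grid {A B W κ : Type*} [Fintype A] [Fintype B] [Fintype W] [Fintype κ]
    [Nonempty κ] (hA : Fintype.card κ * Fintype.card W ≤ Fintype.card A)
    (hB : Fintype.card κ ^ Fintype.card A * Fintype.card W ≤ Fintype.card B) (χ : A → B → κ) :
    ∃ (k : κ) (x : W ↪ A) (y : W ↪ B), ∀ i j, χ (x i) (y j) = k := by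
  classical
  rw [← Fintype.card_fun] at hB
  obtain ⟨φ, hφ⟩ := Fintype.exists_le_card_fiber_of_mul_le_card (fun b a ↦ χ a b) hB
  obtain ⟨k, hk⟩ := Fintype.exists_le_card_fiber_of_mul_le_card φ hA
  rw [← Fintype.card_coe] at hφ hk
  obtain ⟨y⟩ := Function.Embedding.nonempty_of_card_le hφ
  obtain ⟨x⟩ := Function.Embedding.nonempty_of_card_le hk
  refine ⟨k, x.trans (.subtype _), y.trans (.subtype _), fun i j ↦ ?_⟩
  exact (congrFun (mem_filter.1 (y j).2).2 _).trans (mem_filter.1 (x i).2).2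

lemma exists_arrows_of_coloring {W : Type*} [Finite W] {F : SimpleGraph W} (β : F.Coloring Bool)
    {r : ℕ} (hr : 0 < r) : ∃ (N : ℕ) (G : SimpleGraph (Fin N)), Arrows G F r := by
  classical
  have := Fintype.ofFinite W
  have : NeZero r := ⟨hr.ne'⟩
  let A := Fin (r * Fintype.card W)
  let B := Fin (r ^ (r * Fintype.card W) * Fintype.card W)
  let e := Fintype.equivFin (A ⊕ B)
  refine ⟨Fintype.card (A ⊕ B), ⊤, fun c ↦ ?_⟩
  obtain ⟨k, x, y, hxy⟩ := exists_monochromatic_grid (κ := Fin r) (W := W) (A := A) (B := B)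
    (by simp [A]) (by simp [A, B]) fun a b ↦ c s(e (.inl a), e (.inr b))
  let f (w : W) : A ⊕ B := if β w then .inl (x w) else .inr (y w)
  have hf : Function.Injective f := by
    intro v w hvw
    simp only [f] at hvw
    split_ifs at hvw
    · exact x.injective (Sum.inl_injective hvw)
    · exact y.injective (Sum.inr_injective hvw)
  refine ⟨k, e ∘ f, e.injective.comp hf, fun v w hvw ↦ ⟨(e.injective.comp hf).ne hvw.ne, ?_⟩⟩
  have hβ := β.valid hvw
  cases hv : β v <;> cases hw : β w
  · simp [hv, hw] at hβ
  · simpa [f, hv, hw, Sym2.eq_swap] using hxy w v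
  · simpa [f, hv, hw] using hxy v w
  · simp [hv, hw] at hβ

end Existence

/-- Lower bound: there is `c > 0` with `R̂(Pₙ, r) ≥ (r+3)r·n/4 − c r²` for all
integers `r ≥ 2` and `n ≥ 1`. -/
theorem sizeRamsey_path_lower :
    ∃ c : ℝ, 0 < c ∧ ∀ r : ℕ, 2 ≤ r → ∀ n : ℕ, 1 ≤ n →
      ((r : ℝ) + 3) * r * n / 4 - c * r ^ 2 ≤ (sizeRamsey (pathGraph n) r : ℝ) := by
  refine ⟨50, by norm_num, fun r hr n _ ↦ ?_⟩
  obtain ⟨N₀, G₀, hG₀⟩ := exists_arrows_of_coloring (pathGraph.bicoloring n) (show 0 < r by lia)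
  obtain ⟨N, G, hcard, hG⟩ : sizeRamsey (pathGraph n) r ∈ {m | ∃ (N : ℕ) (G : SimpleGraph (Fin N)),
    G.edgeSet.ncard = m ∧ Arrows G (pathGraph n) r} := Nat.sInf_mem ⟨_, N₀, G₀, rfl, hG₀⟩
  obtain ⟨K, rfl⟩ := Nat.exists_eq_add_one.2 (show 0 < r by lia)
  by_contra! hlt
  refine not_arrows_pathGraph ?_ hG
  rw [← Set.ncard_coe_finset, coe_edgeFinset, hcard]
  push_cast at hlt
  rify
  linarith
end

section
/- There exists an integer N such that for every integer n ≥ N, the 2-colour size-Ramsey number of the path on n vertices satisfies R̂(P_n, 2) ≤ 74 n. -/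
open SimpleGraph

/-!
Suppose that neither colour class of a 2-coloured graph contains `P_n`. A depth-first search of the
red graph, stopped when as many vertices are finished as are unvisited, yields disjoint sets `U`
and `W` of equal size, with no red edge between them, such that the remaining vertices form a red
path and so are fewer than `n`. A depth-first search of the blue edges between `U` and `W` yields in
the same way `S` and `T`; as the stack alternates between `U` and `W`, the opposite classes `U ∩ S`
and `W ∩ T`, and likewise `U ∩ T` and `W ∩ S`, have equal size. No edge of either colour joins two
opposite classes, and fewer than `2n` vertices lie outside the four classes.

The graph is a union of `d` random perfect matchings. A union bound over the possible labellings of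
the vertices by classes shows that some union admits none of them. By counting permutations that
carry a labelling to a given one, the probability that a random matching respects a labelling is
controlled by the number of labellings respected by a fixed matching. The latter is a coefficient
of a generating function, bounded by evaluating that function at positive weights.
-/

namespace SizeRamseyPath

open Finset

section Arrows

variable {V W W' : Type*} {G : SimpleGraph V} {F : SimpleGraph W} {F' : SimpleGraph W'} {r : ℕ}

/-- The spanning subgraph of `G` formed by the edges of colour `k`. -/
def colourClass (G : SimpleGraph V) (c : Sym2 V → Fin r) (k : Fin r) : SimpleGraph V where
  Adj u v := G.Adj u v ∧ c s(u, v) = k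
  symm := ⟨fun _ _ h => ⟨h.1.symm, by rw [Sym2.eq_swap]; exact h.2⟩⟩
  loopless := ⟨fun _ h => h.1.ne rfl⟩

theorem arrows_iff_isContained_colourClass :
    Arrows G F r ↔ ∀ c : Sym2 V → Fin r, ∃ k, F ⊑ colourClass G c k := by
  refine forall_congr' fun c => exists_congr fun k => ⟨?_, ?_⟩
  · rintro ⟨f, hf, hadj⟩
    exact ⟨⟨⟨f, hadj _ _⟩, hf⟩⟩
  · rintro ⟨f⟩
    exact ⟨f, f.injective, fun a b hab => f.toHom.map_adj hab⟩

theorem arrows_of_isContained (hF : F' ⊑ F) (h : Arrows G F r) : Arrows G F' r := by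
  rw [arrows_iff_isContained_colourClass] at h ⊢
  exact fun c => (h c).imp fun _ => hF.trans

theorem sizeRamsey_le_ncard_edgeSet [Finite V] (h : Arrows G F r) :
    sizeRamsey F r ≤ G.edgeSet.ncard := by
  let e := Finite.equivFin V
  let φ : G ≃g G.map e.toEmbedding := SimpleGraph.Iso.map e G
  refine Nat.sInf_le ⟨Nat.card V, G.map e.toEmbedding, ?_, fun c => ?_⟩
  · exact (Nat.card_congr φ.mapEdgeSet).symm
  · obtain ⟨k, f, hf, hadj⟩ := h fun x => c (x.map e)
    refine ⟨k, e ∘ f, e.injective.comp hf, fun a b hab => ?_⟩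
    exact ⟨φ.map_adj_iff.2 (hadj a b hab).1, (hadj a b hab).2⟩

theorem isContained_pathGraph_of_le {m n : ℕ} (hmn : m ≤ n) : pathGraph m ⊑ pathGraph n := by
  refine ⟨⟨⟨Fin.castLE hmn, fun {a b} hab => ?_⟩, Fin.castLE_injective hmn⟩⟩
  simpa only [pathGraph_adj, Fin.val_castLE] using hab

theorem isContained_pathGraph_of_isChain {l : List V} (hl : l.IsChain G.Adj) (hnodup : l.Nodup) :
    pathGraph l.length ⊑ G := by
  refine ⟨⟨⟨l.get, fun {a b} hab => ?_⟩, hnodup.injective_get⟩⟩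
  rw [List.isChain_iff_getElem] at hl
  rcases pathGraph_adj.1 hab with hab | hab
  · simpa only [List.get_eq_getElem, hab] using hl a (by omega)
  · simpa only [List.get_eq_getElem, hab] using (hl b (by omega)).symm

theorem length_lt_of_free_pathGraph {n : ℕ} (hG : (pathGraph n).Free G) {l : List V}
    (hl : l.IsChain G.Adj) (hnodup : l.Nodup) : l.length < n := by
  by_contra! hn
  exact hG ((isContained_pathGraph_of_le hn).trans (isContained_pathGraph_of_isChain hl hnodup))

end Arrows

section PathSeparation

variable {V : Type*} [DecidableEq V] {G : SimpleGraph V} {X S T : Finset V} {P : List V}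

theorem two_mul_countP_mem_le_of_isChain_between {U W : Finset V} (hUW : Disjoint U W)
    {l : List V} (hl : l.IsChain (G.between U W).Adj) : 2 * l.countP (· ∈ U) ≤ l.length + 1 := by
  have halternating : (l.map fun v => decide (v ∈ U)).IsChain (· ≠ ·) := by
    refine List.isChain_map_of_isChain _ ?_ hl
    rintro u v ⟨-, ⟨hu, hv⟩ | ⟨hu, hv⟩⟩
    · simpa [mem_coe.1 hu] using Finset.disjoint_right.1 hUW hv
    · simpa [mem_coe.1 hv] using Finset.disjoint_right.1 hUW hu
  simpa [List.count, List.countP_map, Function.comp_def] using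
    halternating.two_mul_count_bool_le_length_add_one true

/-- The vertex set `X` is partitioned into `S`, `T` and the vertices of a path `P` of `G`, and no
edge of `G` joins `S` to `T`: the state of a depth-first search of `G` with finished vertices `S`,
unvisited vertices `T` and stack `P`, the head of the list being the top of the stack. -/
structure PathSeparation (G : SimpleGraph V) (X S T : Finset V) (P : List V) : Prop where
  isChain : P.IsChain G.Adj
  nodup : P.Nodup
  disjoint : Disjoint S T
  disjoint_path : Disjoint (S ∪ T) P.toFinset
  union_eq : S ∪ T ∪ P.toFinset = X
  not_adj : ∀ u ∈ S, ∀ v ∈ T, ¬ G.Adj u v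

namespace PathSeparation

theorem subset (h : PathSeparation G X S T P) : S ∪ T ⊆ X :=
  subset_union_left.trans h.union_eq.subset

theorem card_inter (h : PathSeparation G X S T P) {A : Finset V} (hA : A ⊆ X) :
    #(A ∩ S) + #(A ∩ T) + P.countP (· ∈ A) = #A := by
  have hpath : #(A ∩ P.toFinset) = P.countP (· ∈ A) := by
    rw [List.countP_eq_length_filter, ← List.toFinset_card_of_nodup (h.nodup.filter _)]
    congr 1
    ext v
    simp [and_comm]
  rw [← hpath, ← card_union_of_disjoint (h.disjoint.mono inter_subset_right inter_subset_right),
    ← inter_union_distrib_left,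
    ← card_union_of_disjoint (h.disjoint_path.mono inter_subset_right inter_subset_right),
    ← inter_union_distrib_left, h.union_eq, inter_eq_left.2 hA]

theorem card_eq (h : PathSeparation G X S T P) : #S + #T + P.length = #X := by
  rw [← h.union_eq, card_union_of_disjoint h.disjoint_path, card_union_of_disjoint h.disjoint,
    List.toFinset_card_of_nodup h.nodup]

theorem eq_of_adj (h : PathSeparation G X S T P) {u v : V} {a b : Bool} (hu : u ∈ cond a S T)
    (hv : v ∈ cond b S T) (hadj : G.Adj u v) : a = b := by
  cases a <;> cases b
  · rfl
  · exact absurd hadj.symm (h.not_adj v hv u hu)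
  · exact absurd hadj (h.not_adj u hu v hv)
  · rfl

theorem init (G : SimpleGraph V) (X : Finset V) : PathSeparation G X ∅ X [] where
  isChain := .nil
  nodup := .nil
  disjoint := disjoint_empty_left X
  disjoint_path := disjoint_empty_right _
  union_eq := by simp
  not_adj := by simp

theorem push (h : PathSeparation G X S T P) {w : V} (hw : w ∈ T)
    (hchain : (w :: P).IsChain G.Adj) : PathSeparation G X S (T.erase w) (w :: P) := by
  have hwS : w ∉ S := fun hS => Finset.disjoint_left.1 h.disjoint hS hw
  have hwP : w ∉ P := fun hP =>
    Finset.disjoint_left.1 h.disjoint_path (mem_union_right _ hw) (List.mem_toFinset.2 hP)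
  refine ⟨hchain, List.nodup_cons.2 ⟨hwP, h.nodup⟩, h.disjoint.mono_right (erase_subset _ _),
    ?_, ?_, fun u hu v hv => h.not_adj u hu v (mem_of_mem_erase hv)⟩
  · rw [List.toFinset_cons, disjoint_insert_right]
    exact ⟨by simp [hwS], h.disjoint_path.mono_left (union_subset_union_right (erase_subset _ _))⟩
  · rw [List.toFinset_cons, union_insert, ← insert_union, ← union_insert, insert_erase hw,
      h.union_eq]

theorem pop {v : V} (h : PathSeparation G X S T (v :: P)) (hv : ∀ w ∈ T, ¬ G.Adj v w) :
    PathSeparation G X (insert v S) T P := by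
  have hdisj := h.disjoint_path
  rw [List.toFinset_cons, disjoint_insert_right, notMem_union] at hdisj
  have hvP : v ∉ P.toFinset := by simpa using (List.nodup_cons.1 h.nodup).1
  refine ⟨h.isChain.tail, h.nodup.tail, disjoint_insert_left.2 ⟨hdisj.1.2, h.disjoint⟩, ?_, ?_,
    (forall_mem_insert _ _ _).2 ⟨hv, h.not_adj⟩⟩
  · rw [insert_union]
    exact disjoint_insert_left.2 ⟨hvP, hdisj.2⟩
  · rw [← h.union_eq, List.toFinset_cons, union_insert, insert_union, insert_union]

theorem exists_step (h : PathSeparation G X S T P) (hlt : #S < #T) :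
    ∃ S' T' P', PathSeparation G X S' T' P' ∧ #S' ≤ #T' ∧
      2 * #S' + P'.length = 2 * #S + P.length + 1 := by
  by_cases hpush : ∃ w ∈ T, (w :: P).IsChain G.Adj
  · obtain ⟨w, hw, hchain⟩ := hpush
    refine ⟨S, T.erase w, w :: P, h.push hw hchain, ?_, by rw [List.length_cons]; omega⟩
    rw [card_erase_of_mem hw]
    omega
  · push Not at hpush
    match P, h with
    | [], _ =>
      obtain ⟨w, hw⟩ : T.Nonempty := card_pos.1 (by omega)
      exact absurd (List.isChain_singleton w) (hpush w hw)
    | v :: P, h =>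
      have hv : ∀ w ∈ T, ¬ G.Adj v w := fun w hw hvw =>
        hpush w hw (List.isChain_cons_cons.2 ⟨hvw.symm, h.isChain⟩)
      have hvS : v ∉ S := fun hS =>
        Finset.disjoint_left.1 h.disjoint_path (mem_union_left _ hS) (by simp)
      refine ⟨insert v S, T, P, h.pop hv, ?_, ?_⟩ <;> rw [card_insert_of_notMem hvS]
      · omega
      · rw [List.length_cons]; omega

theorem exists_card_eq_of_card_le {S T : Finset V} {P : List V} (h : PathSeparation G X S T P)
    (hle : #S ≤ #T) : ∃ S' T' P', PathSeparation G X S' T' P' ∧ #S' = #T' := by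
  rcases hle.eq_or_lt with heq | hlt
  · exact ⟨S, T, P, h, heq⟩
  · obtain ⟨S', T', P', h', hle', hprogress⟩ := h.exists_step hlt
    have : 2 * #X - (2 * #S' + P'.length) < 2 * #X - (2 * #S + P.length) := by
      have hcard := h'.card_eq
      omega
    exact h'.exists_card_eq_of_card_le hle'
termination_by 2 * #X - (2 * #S + P.length)

theorem exists_card_eq (G : SimpleGraph V) (X : Finset V) :
    ∃ S T P, PathSeparation G X S T P ∧ #S = #T :=
  (init G X).exists_card_eq_of_card_le (by simp)

theorem card_inter_of_between {U W : Finset V} (hUW : Disjoint U W) (hcard : #U = #W)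
    (h : PathSeparation (G.between U W) (U ∪ W) S T P) (hST : #S = #T) :
    #(U ∩ S) = #(W ∩ T) ∧ #(U ∩ T) = #(W ∩ S) ∧
      2 * (#(U ∩ S) + #(U ∩ T)) + P.length = #U + #W := by
  have hU := h.card_inter (A := U) subset_union_left
  have hW := h.card_inter (A := W) subset_union_right
  have hcount {A : Finset V} (hA : A ⊆ U ∪ W) : #(U ∩ A) + #(W ∩ A) = #A := by
    rw [← card_union_of_disjoint (hUW.mono inter_subset_left inter_subset_left),
      ← union_inter_distrib_right, inter_eq_right.2 hA]
  have hS := hcount (subset_union_left.trans h.subset)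
  have hT := hcount (subset_union_right.trans h.subset)
  have hpathU := two_mul_countP_mem_le_of_isChain_between hUW h.isChain
  have hpathW := two_mul_countP_mem_le_of_isChain_between (G := G) hUW.symm
    (between_comm (G := G) ▸ h.isChain)
  have htotal := h.card_eq
  rw [card_union_of_disjoint hUW] at htotal
  omega

end PathSeparation

end PathSeparation

section Counting

open scoped Nat

variable {α ι L : Type*} [Fintype α] [DecidableEq α] [Fintype ι] [DecidableEq ι] [Fintype L]
  [DecidableEq L] {m : L → ℕ}

/-- The labellings of `α` that use each label `a` exactly `m a` times. -/
def labellings (α : Type*) [Fintype α] [DecidableEq α] (m : L → ℕ) : Finset (α → L) :=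
  {ℓ | ∀ a, #{x | ℓ x = a} = m a}

theorem mem_labellings {ℓ : α → L} : ℓ ∈ labellings α m ↔ ∀ a, #{x | ℓ x = a} = m a :=
  mem_filter_univ ℓ

theorem prod_comp_of_mem_labellings {R : Type*} [CommMonoid R] {ℓ : α → L}
    (hℓ : ℓ ∈ labellings α m) (y : L → R) : ∏ x, y (ℓ x) = ∏ a, y a ^ m a := by
  simp_rw [← prod_fiberwise univ ℓ, ← mem_labellings.1 hℓ, ← prod_const]
  exact prod_congr rfl fun a _ => prod_congr rfl fun x hx => by rw [(mem_filter.1 hx).2]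

theorem card_eq_sum_of_mem_labellings {ℓ : α → L} (hℓ : ℓ ∈ labellings α m) :
    Fintype.card α = ∑ a, m a := by
  simp_rw [← mem_labellings.1 hℓ, ← card_univ]
  exact card_eq_sum_card_fiberwise fun x _ => mem_univ (ℓ x)

theorem card_labellings_mul_prod_pow_le {y : L → ℝ} (hy : ∀ a, 0 ≤ y a) :
    #(labellings α m) * ∏ a, y a ^ m a ≤ (∑ a, y a) ^ Fintype.card α := by
  calc (#(labellings α m) * ∏ a, y a ^ m a : ℝ)
      = ∑ ℓ ∈ labellings α m, ∏ x, y (ℓ x) := by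
        rw [sum_congr rfl fun ℓ hℓ => prod_comp_of_mem_labellings hℓ y, sum_const, nsmul_eq_mul]
    _ ≤ ∑ ℓ : α → L, ∏ x, y (ℓ x) :=
        sum_le_univ_sum_of_nonneg fun ℓ => prod_nonneg fun x _ => hy (ℓ x)
    _ = (∑ a, y a) ^ Fintype.card α := by
        rw [← Fintype.prod_sum fun _ => y, prod_const, card_univ]

variable (r : L → L → Prop) [DecidableRel r]

/-- The labellings of two copies of `ι`, each label `a` being used exactly `m a` times, such that
the two copies of every element of `ι` have related labels. -/
def relatedLabellings (ι : Type*) [Fintype ι] [DecidableEq ι] (m : L → ℕ) :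
    Finset (ι ⊕ ι → L) :=
  {ℓ ∈ labellings (ι ⊕ ι) m | ∀ i, r (ℓ (.inl i)) (ℓ (.inr i))}

theorem card_relatedLabellings_mul_prod_pow_le {y : L → ℝ} (hy : ∀ a, 0 ≤ y a) :
    #(relatedLabellings r ι m) * ∏ a, y a ^ m a ≤
      (∑ p : L × L, if r p.1 p.2 then y p.1 * y p.2 else 0) ^ Fintype.card ι := by
  let f (p : L × L) : ℝ := if r p.1 p.2 then y p.1 * y p.2 else 0
  have hf (p : L × L) : 0 ≤ f p := by
    dsimp only [f]
    split_ifs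
    · exact mul_nonneg (hy _) (hy _)
    · exact le_rfl
  let e : (ι ⊕ ι → L) ≃ (ι → L × L) :=
    (Equiv.sumArrowEquivProdArrow ι ι L).trans (Equiv.arrowProdEquivProdArrow ι _ _).symm
  have hprod : ∀ ℓ ∈ relatedLabellings r ι m, ∏ i, f (e ℓ i) = ∏ a, y a ^ m a := by
    intro ℓ hℓ
    obtain ⟨hℓ, hr⟩ := mem_filter.1 hℓ
    rw [← prod_comp_of_mem_labellings hℓ, Fintype.prod_sum_type, ← prod_mul_distrib]
    exact prod_congr rfl fun i _ => if_pos (hr i)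
  calc (#(relatedLabellings r ι m) * ∏ a, y a ^ m a : ℝ)
      = ∑ ℓ ∈ relatedLabellings r ι m, ∏ i, f (e ℓ i) := by
        rw [sum_congr rfl hprod, sum_const, nsmul_eq_mul]
    _ ≤ ∑ ℓ, ∏ i, f (e ℓ i) := sum_le_univ_sum_of_nonneg fun ℓ => prod_nonneg fun i _ => hf _
    _ = ∑ g : ι → L × L, ∏ i, f (g i) := e.sum_comp fun g => ∏ i, f (g i)
    _ = (∑ p, f p) ^ Fintype.card ι := by
        rw [← Fintype.prod_sum fun _ => f, prod_const, card_univ]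

/-- The permutations that carry the perfect matching `{inl i, inr i}` to a perfect matching joining
only vertices with related labels. -/
def relatedPerms (ℓ : ι ⊕ ι → L) : Finset (Equiv.Perm (ι ⊕ ι)) :=
  {τ | ∀ i, r (ℓ (τ (.inl i))) (ℓ (τ (.inr i)))}

theorem card_perms_comp_eq_le (ℓ w : α → L) :
    #{τ : Equiv.Perm α | ℓ ∘ τ = w} ≤ ∏ a, (#{x | ℓ x = a})! := by
  rcases eq_empty_or_nonempty {τ : Equiv.Perm α | ℓ ∘ τ = w} with h | ⟨τ₀, h₀⟩
  · rw [h]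
    exact Nat.zero_le _
  have hstabilizer : #{g : Equiv.Perm α | ℓ ∘ g = ℓ} = ∏ a, (#{x | ℓ x = a})! := by
    simp_rw [← Fintype.card_subtype, DomMulAct.stabilizer_card]
  rw [← hstabilizer]
  refine card_le_card_of_injOn (· * τ₀⁻¹) (fun τ hτ => ?_) fun _ _ _ _ h => mul_right_cancel h
  have hcomp : ℓ ∘ τ = ℓ ∘ τ₀ := (mem_filter.1 hτ).2.trans (mem_filter.1 h₀).2.symm
  simp only [coe_filter_univ, Set.mem_ofPred_eq, Equiv.Perm.coe_mul]
  rw [← Function.comp_assoc, hcomp, Function.comp_assoc, ← Equiv.Perm.coe_mul, mul_inv_cancel,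
    Equiv.Perm.coe_one, Function.comp_id]

theorem card_relatedPerms_le {ℓ : ι ⊕ ι → L} (hℓ : ℓ ∈ labellings (ι ⊕ ι) m) :
    #(relatedPerms r ℓ) ≤ (∏ a, (m a)!) * #(relatedLabellings r ι m) := by
  refine card_le_mul_card_image_of_maps_to (f := fun τ : Equiv.Perm _ => ℓ ∘ τ) ?_ _ ?_
  · intro τ hτ
    refine mem_filter.2 ⟨mem_labellings.2 fun a => ?_, (mem_filter.1 hτ).2⟩
    rw [← mem_labellings.1 hℓ a]
    exact card_equiv τ (by simp)
  · intro w _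
    simp_rw [← mem_labellings.1 hℓ]
    exact (card_le_card (filter_subset_filter _ (subset_univ _))).trans (card_perms_comp_eq_le ℓ w)

end Counting

section Factorial

open scoped Nat

open Real

theorem factorial_le_exp_one_mul_div_exp_one_pow (n : ℕ) :
    (n ! : ℝ) ≤ exp 1 * (n + 1) * (n / exp 1) ^ n := by
  rcases n.eq_zero_or_pos with rfl | hn
  · simp
  have hstirling : Stirling.stirlingSeq n ≤ Stirling.stirlingSeq 1 := by
    obtain ⟨k, rfl⟩ := Nat.exists_eq_add_of_le' hn
    exact Stirling.stirlingSeq'_antitone k.zero_le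
  rw [Stirling.stirlingSeq_one, Stirling.stirlingSeq, div_le_iff₀ (by positivity)] at hstirling
  calc (n ! : ℝ) ≤ exp 1 / √2 * (√(2 * n) * (n / exp 1) ^ n) := hstirling
    _ = exp 1 * √n * (n / exp 1) ^ n := by
      rw [sqrt_mul zero_le_two]
      field_simp
    _ ≤ exp 1 * (n + 1) * (n / exp 1) ^ n := by
      gcongr
      exact sqrt_le_iff.2 ⟨by positivity, by nlinarith⟩

theorem div_exp_one_pow_le_factorial (n : ℕ) : (n / exp 1) ^ n ≤ (n ! : ℝ) := by
  have hexp := pow_div_factorial_le_exp (n : ℝ) n.cast_nonneg n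
  rw [div_le_iff₀ (by positivity), ← div_le_iff₀' (by positivity)] at hexp
  rwa [div_pow, ← exp_nat_mul, mul_one]

theorem prod_factorial_le {L : Type*} [Fintype L] {m : L → ℕ} {N : ℕ} (hm : ∑ a, m a = N) :
    ∏ a, ((m a)! : ℝ) ≤
      (exp 1 * (N + 1)) ^ Fintype.card L * N ! * ∏ a, (m a / N : ℝ) ^ m a := by
  have hle (a : L) : m a ≤ N := hm ▸ single_le_sum (fun a _ => (m a).zero_le) (mem_univ a)
  have hsplit (a : L) : (m a / exp 1) ^ m a = (m a / N : ℝ) ^ m a * (N / exp 1) ^ m a := by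
    rcases eq_or_ne (m a) 0 with ha | ha
    · simp [ha]
    have hN : (N : ℝ) ≠ 0 := by exact_mod_cast (ha.bot_lt.trans_le (hle a)).ne'
    rw [← mul_pow, div_mul_div_cancel₀ hN]
  calc ∏ a, ((m a)! : ℝ) ≤ ∏ a, exp 1 * (N + 1) * (m a / exp 1) ^ m a := by
        refine prod_le_prod (fun a _ => by positivity) fun a _ => ?_
        refine (factorial_le_exp_one_mul_div_exp_one_pow (m a)).trans ?_
        gcongr
        exact hle a
    _ = (exp 1 * (N + 1)) ^ Fintype.card L * (N / exp 1) ^ N * ∏ a, (m a / N : ℝ) ^ m a := by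
        simp_rw [hsplit]
        rw [prod_mul_distrib, prod_mul_distrib (f := fun a => (m a / N : ℝ) ^ m a), prod_const,
          card_univ, prod_pow_eq_pow_sum, hm]
        ring
    _ ≤ _ := by
        gcongr
        exact div_exp_one_pow_le_factorial N

end Factorial

section Probability

open scoped Nat

open Real

variable {ι L : Type*} [Fintype ι] [DecidableEq ι] [Fintype L] [DecidableEq L] {m : L → ℕ}
  (r : L → L → Prop) [DecidableRel r]

theorem card_relatedPerms_mul_prod_pow_le {N : ℕ} (hN : Fintype.card (ι ⊕ ι) = N)
    {ℓ : ι ⊕ ι → L} (hℓ : ℓ ∈ labellings (ι ⊕ ι) m) {y : L → ℝ} (hy : ∀ a, 0 ≤ y a) :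
    #(relatedPerms r ℓ) * ∏ a, y a ^ m a ≤
      (exp 1 * (N + 1)) ^ Fintype.card L * Fintype.card (Equiv.Perm (ι ⊕ ι)) *
        (∑ p : L × L, if r p.1 p.2 then m p.1 / N * y p.1 * (m p.2 / N * y p.2) else 0) ^
          Fintype.card ι := by
  have hm : ∑ a, m a = N := (card_eq_sum_of_mem_labellings hℓ).symm.trans hN
  have hperms : (#(relatedPerms r ℓ) : ℝ) ≤ (∏ a, ((m a)! : ℝ)) *
      #(relatedLabellings r ι m) := by
    exact_mod_cast card_relatedPerms_le r hℓ
  have hlabellings := card_relatedLabellings_mul_prod_pow_le r (ι := ι) (m := m)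
    (y := fun a => m a / N * y a) fun a => mul_nonneg (by positivity) (hy a)
  have hy' : 0 ≤ ∏ a, y a ^ m a := prod_nonneg fun a _ => pow_nonneg (hy a) _
  rw [Fintype.card_perm, hN]
  calc (#(relatedPerms r ℓ) * ∏ a, y a ^ m a : ℝ)
      ≤ (∏ a, ((m a)! : ℝ)) * #(relatedLabellings r ι m) * ∏ a, y a ^ m a := by gcongr
    _ ≤ (exp 1 * (N + 1)) ^ Fintype.card L * N ! * (∏ a, (m a / N : ℝ) ^ m a) *
          #(relatedLabellings r ι m) * ∏ a, y a ^ m a := by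
        gcongr
        exact prod_factorial_le hm
    _ = (exp 1 * (N + 1)) ^ Fintype.card L * N ! *
          (#(relatedLabellings r ι m) * ∏ a, (m a / N * y a) ^ m a) := by
        simp_rw [mul_pow, prod_mul_distrib]
        ring
    _ ≤ _ := by gcongr

theorem exists_forall_exists_notMem {β σ : Type*} [Fintype β] {d : ℕ}
    {s : Finset σ} {A : σ → Finset β} (h : ∑ i ∈ s, #(A i) ^ d < Fintype.card β ^ d) :
    ∃ f : Fin d → β, ∀ i ∈ s, ∃ j, f j ∉ A i := by
  classical
  by_contra! hcover
  have hsub : (univ : Finset (Fin d → β)) ⊆ s.biUnion fun i => Fintype.piFinset fun _ => A i := by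
    simpa [subset_iff] using hcover
  refine h.not_ge ?_
  simpa using (card_le_card hsub).trans card_biUnion_le

end Probability

section Label

/-- The label of a vertex in a pair of vertex partitions `(U, W, P)` and `(S, T, Q)`: `none` for
the vertices on one of the paths `P` and `Q`, and `some (a, b)` for the others, where `a` tells
`U` from `W` and `b` tells `S` from `T`. -/
abbrev Label := Option (Bool × Bool)

/-- The relation between the labels of two adjacent vertices: no edge joins `U ∩ S` to `W ∩ T` or
`U ∩ T` to `W ∩ S`. -/
def Compatible (x y : Label) : Prop :=
  ∀ p ∈ x, ∀ q ∈ y, p.1 = q.1 ∨ p.2 = q.2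

instance : DecidableRel Compatible := fun x y =>
  inferInstanceAs (Decidable (∀ p ∈ x, ∀ q ∈ y, p.1 = q.1 ∨ p.2 = q.2))

/-- The function on labels that takes the value `s` on the opposite classes `U ∩ S` and `W ∩ T`,
the value `t` on the opposite classes `U ∩ T` and `W ∩ S`, and the value `r` on `none`. -/
def classFun {R : Type*} (s t r : R) (x : Label) : R :=
  x.elim r fun p => if p.1 = p.2 then s else t

theorem classFun_nonneg {s t r : ℝ} (hs : 0 ≤ s) (ht : 0 ≤ t) (hr : 0 ≤ r) (x : Label) :
    0 ≤ classFun s t r x := by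
  rcases x with _ | p
  · exact hr
  · exact ite_nonneg hs ht

theorem sum_classFun {R : Type*} [CommSemiring R] (s t r : R) :
    ∑ x, classFun s t r x = r + 2 * s + 2 * t := by
  simp only [Fintype.sum_option, Fintype.sum_prod_type, Fintype.sum_bool, classFun, Option.elim,
    reduceIte, Bool.true_eq_false, Bool.false_eq_true]
  ring

theorem prod_classFun_pow {R : Type*} [CommMonoid R] (x y w : R) (s t r : ℕ) :
    ∏ a, classFun x y w a ^ classFun s t r a = x ^ (2 * s) * y ^ (2 * t) * w ^ r := by
  simp only [Fintype.prod_option, Fintype.prod_prod_type, Fintype.prod_bool, classFun, Option.elim,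
    reduceIte, Bool.true_eq_false, Bool.false_eq_true, two_mul, pow_add]
  ac_rfl

theorem sum_compatible_classFun {R : Type*} [CommRing R] (s t r : R) :
    ∑ p : Label × Label, (if Compatible p.1 p.2 then classFun s t r p.1 * classFun s t r p.2 else 0)
      = (r + 2 * s + 2 * t) ^ 2 - 2 * s ^ 2 - 2 * t ^ 2 := by
  simp +decide only [Fintype.sum_prod_type, Fintype.sum_option, Fintype.sum_bool, classFun,
    Option.elim, reduceIte]
  ring

/-- The labellings in which each of the opposite classes `U ∩ S` and `W ∩ T` has `s` elements and
each of the opposite classes `U ∩ T` and `W ∩ S` has `t`, for some `s + t = M`, and `2 * n` elements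
are labelled `none`. -/
def balancedLabellings (V : Type*) [Fintype V] [DecidableEq V] (n M : ℕ) : Finset (V → Label) :=
  (antidiagonal M).biUnion fun p => labellings V (classFun p.1 p.2 (2 * n))

theorem mem_balancedLabellings {V : Type*} [Fintype V] [DecidableEq V] {n M : ℕ} {ℓ : V → Label} :
    ℓ ∈ balancedLabellings V n M ↔
      ∃ s t, s + t = M ∧ ℓ ∈ labellings V (classFun s t (2 * n)) := by
  simp [balancedLabellings]

variable {V : Type*} [DecidableEq V] {X U W S T : Finset V} {P Q : List V}

/-- The labelling of the vertices that two path separations `(U, W, P)` and `(S, T, Q)` with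
`S ∪ T ⊆ U ∪ W` give rise to. -/
def crossLabel (U S T : Finset V) (v : V) : Label :=
  if v ∈ S ∪ T then some (decide (v ∈ U), decide (v ∈ S)) else none

theorem crossLabel_eq_some_iff (hUW : Disjoint U W) (hST : Disjoint S T) (hsub : S ∪ T ⊆ U ∪ W)
    {v : V} {a b : Bool} : crossLabel U S T v = some (a, b) ↔ v ∈ cond a U W ∩ cond b S T := by
  have hU : v ∈ W → v ∉ U := fun hW hU => Finset.disjoint_left.1 hUW hU hW
  have hS : v ∈ T → v ∉ S := fun hT hS => Finset.disjoint_left.1 hST hS hT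
  have hUnion : v ∈ S ∨ v ∈ T → v ∈ U ∨ v ∈ W := by simpa only [mem_union] using @hsub v
  cases a <;> cases b <;> simp only [crossLabel, mem_union, Option.ite_none_right_eq_some,
    Option.some.injEq, Prod.mk.injEq, decide_eq_true_eq, decide_eq_false_iff_not, cond_true,
    cond_false, mem_inter] <;> tauto

theorem compatible_crossLabel {G₀ G₁ : SimpleGraph V} (hP : PathSeparation G₀ X U W P)
    (hQ : PathSeparation (G₁.between U W) (U ∪ W) S T Q) {u v : V} (huv : (G₀ ⊔ G₁).Adj u v) :
    Compatible (crossLabel U S T u) (crossLabel U S T v) := by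
  rintro ⟨a, b⟩ hu ⟨a', b'⟩ hv
  rw [Option.mem_def, crossLabel_eq_some_iff hP.disjoint hQ.disjoint hQ.subset, mem_inter] at hu hv
  refine or_iff_not_imp_left.2 fun ha => hQ.eq_of_adj hu.2 hv.2 ⟨?_, ?_⟩
  · exact huv.resolve_left fun h₀ => ha (hP.eq_of_adj hu.1 hv.1 h₀)
  · cases a <;> cases a'
    · exact absurd rfl ha
    · exact Or.inr ⟨hu.1, hv.1⟩
    · exact Or.inl ⟨hu.1, hv.1⟩
    · exact absurd rfl ha

end Label

section Labelling

variable {V : Type*} [Fintype V] {n M : ℕ}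

theorem exists_compatible_labelling {G₀ G₁ : SimpleGraph V} (h₀ : (pathGraph n).Free G₀)
    (h₁ : (pathGraph n).Free G₁) :
    ∃ (ℓ : V → Label) (s t : ℕ), (∀ p, #{v | ℓ v = some p} = if p.1 = p.2 then s else t) ∧
      Fintype.card V ≤ 2 * (n + (s + t)) ∧ ∀ u v, (G₀ ⊔ G₁).Adj u v → Compatible (ℓ u) (ℓ v) := by
  classical
  obtain ⟨U, W, P, hP, hUW⟩ := PathSeparation.exists_card_eq G₀ univ
  obtain ⟨S, T, Q, hQ, hST⟩ := PathSeparation.exists_card_eq (G₁.between U W) (U ∪ W)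
  obtain ⟨hdiag, hanti, hcard⟩ := hQ.card_inter_of_between hP.disjoint hUW hST
  have hPlen := length_lt_of_free_pathGraph h₀ hP.isChain hP.nodup
  have hQlen := length_lt_of_free_pathGraph h₁ (hQ.isChain.imp fun _ _ h => between_le h) hQ.nodup
  have hPcard := hP.card_eq
  rw [card_univ] at hPcard
  refine ⟨crossLabel U S T, #(U ∩ S), #(U ∩ T), ?_, by omega,
    fun u v => compatible_crossLabel hP hQ⟩
  rintro ⟨a, b⟩
  simp only [crossLabel_eq_some_iff hP.disjoint hQ.disjoint hQ.subset, filter_univ_mem]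
  cases a <;> cases b <;> simp [hdiag, hanti]

theorem exists_restricted_labelling {β : Type*} [DecidableEq β] (f : V → Option β)
    {k : β → ℕ} (hk : ∀ b, k b ≤ #{v | f v = some b}) :
    ∃ g : V → Option β, (∀ b, #{v | g v = some b} = k b) ∧ ∀ v, ∀ b ∈ g v, f v = some b := by
  classical
  choose A hA hAcard using fun b => exists_subset_card_eq (hk b)
  have hf {b : β} {v : V} (hv : v ∈ A b) : f v = some b := (mem_filter.1 (hA b hv)).2
  have hg (v : V) (b : β) : (f v).filter (fun b => v ∈ A b) = some b ↔ v ∈ A b := by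
    simp only [Option.filter_eq_some_iff, decide_eq_true_eq, and_iff_right_iff_imp]
    exact hf
  refine ⟨fun v => (f v).filter fun b => v ∈ A b, fun b => ?_, fun v b hb => hf ((hg v b).1 hb)⟩
  simp only [hg, filter_univ_mem, hAcard]

theorem exists_compatible_mem_balancedLabellings [DecidableEq V] {G₀ G₁ : SimpleGraph V}
    (hV : Fintype.card V = 2 * (n + M)) (h₀ : (pathGraph n).Free G₀)
    (h₁ : (pathGraph n).Free G₁) :
    ∃ ℓ ∈ balancedLabellings V n M, ∀ u v, (G₀ ⊔ G₁).Adj u v → Compatible (ℓ u) (ℓ v) := by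
  obtain ⟨ℓ₀, s₀, t₀, hclass, hcard, hcompat⟩ := exists_compatible_labelling h₀ h₁
  obtain ⟨s, t, hs, ht, hst⟩ : ∃ s t, s ≤ s₀ ∧ t ≤ t₀ ∧ s + t = M :=
    ⟨min M s₀, M - min M s₀, by omega, by omega, by omega⟩
  obtain ⟨ℓ, hℓ, hsub⟩ := exists_restricted_labelling ℓ₀
    (k := fun p => if p.1 = p.2 then s else t) fun p => by rw [hclass]; split_ifs <;> assumption
  refine ⟨ℓ, mem_balancedLabellings.2 ⟨s, t, hst, mem_labellings.2 ?_⟩, fun u v huv p hp q hq =>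
    hcompat u v huv p (hsub u p hp) q (hsub v q hq)⟩
  have htotal : #(univ : Finset V) = ∑ x, #{v | ℓ v = x} :=
    card_eq_sum_card_fiberwise fun v _ => mem_univ (ℓ v)
  have hsum := sum_classFun s t (2 * n)
  rw [card_univ, hV, Fintype.sum_option, sum_congr rfl fun p _ => hℓ p] at htotal
  rw [Fintype.sum_option] at hsum
  rintro (_ | p)
  · simp only [classFun, Option.elim] at hsum ⊢
    omega
  · exact hℓ p

end Labelling

section Estimates

open Real

variable {d n M : ℕ} {z : ℝ}

/-- The maximum over real `s + t = M` of the sum, over the pairs of compatible labels, of the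
product of their weights: the weight of a label is its frequency
`classFun s t (2 * n) / (2 * (n + M))`, multiplied by `z` unless the label is `none`. The maximum is
attained at `s = t`. -/
noncomputable def compatibleWeight (n M : ℕ) (z : ℝ) : ℝ :=
  ((z * M + n) / (n + M)) ^ 2 - (z * M / (2 * (n + M))) ^ 2

/-- An upper bound, up to a factor polynomial in `n + M`, for the probability that some labelling in
`balancedLabellings _ n M` is compatible with all of `d` random perfect matchings on `2 * (n + M)`
vertices. The weight `z` is a free parameter, to be optimized. -/
noncomputable def failureRate (d n M : ℕ) (z : ℝ) : ℝ :=
  compatibleWeight n M z ^ (d * (n + M)) /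
    ((M / (4 * (n + M)) * z ^ d) ^ (2 * M) * (n / (n + M)) ^ (2 * n))

theorem compatibleWeight_nonneg (n M : ℕ) (hz : 0 ≤ z) : 0 ≤ compatibleWeight n M z := by
  have hle : z * M / (2 * (n + M)) ≤ (z * M + n) / (n + M) := by
    rw [mul_comm 2, ← div_div]
    refine (half_le_self (by positivity)).trans ?_
    gcongr
    exact le_add_of_nonneg_right n.cast_nonneg
  exact sub_nonneg.2 (pow_le_pow_left₀ (by positivity) hle 2)

theorem failureRate_nonneg (d n M : ℕ) (hz : 0 ≤ z) : 0 ≤ failureRate d n M z :=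
  div_nonneg (pow_nonneg (compatibleWeight_nonneg n M hz) _) (by positivity)

theorem failureRate_mul (d a c : ℕ) (z : ℝ) {k : ℕ} (hk : k ≠ 0) :
    failureRate d (a * k) (c * k) z = failureRate d a c z ^ k := by
  have hk' : (k : ℝ) ≠ 0 := Nat.cast_ne_zero.2 hk
  simp only [failureRate, compatibleWeight, Nat.cast_mul, ← mul_assoc, ← add_mul,
    mul_div_mul_right _ _ hk', pow_mul _ _ k, mul_pow _ _ k, div_pow _ _ k]

theorem card_balancedLabellings_le (V : Type*) [Fintype V] [DecidableEq V] (hn : 0 < n)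
    (hM : 0 < M) :
    (#(balancedLabellings V n M) : ℝ) ≤
      (M + 1) / ((M / (4 * (n + M))) ^ (2 * M) * (n / (n + M)) ^ (2 * n)) := by
  have hclass (p : ℕ × ℕ) (hp : p ∈ antidiagonal M) :
      (#(labellings V (classFun p.1 p.2 (2 * n))) : ℝ) ≤
        1 / ((M / (4 * (n + M))) ^ (2 * M) * (n / (n + M)) ^ (2 * n)) := by
    have hcard := card_labellings_mul_prod_pow_le (α := V) (m := classFun p.1 p.2 (2 * n))
      (y := classFun (M / (4 * (n + M)) : ℝ) (M / (4 * (n + M))) (n / (n + M)))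
      (classFun_nonneg (by positivity) (by positivity) (by positivity))
    have hsum : (n / (n + M) + 2 * (M / (4 * (n + M))) + 2 * (M / (4 * (n + M))) : ℝ) = 1 := by
      field_simp
      ring
    rw [prod_classFun_pow, sum_classFun, hsum, one_pow, ← pow_add, ← mul_add,
      mem_antidiagonal.1 hp] at hcard
    rwa [le_div_iff₀ (by positivity)]
  calc (#(balancedLabellings V n M) : ℝ)
      ≤ ∑ p ∈ antidiagonal M, (#(labellings V (classFun p.1 p.2 (2 * n))) : ℝ) := by
        exact_mod_cast card_biUnion_le
    _ ≤ _ := by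
        refine (sum_le_sum hclass).trans_eq ?_
        rw [sum_const, Nat.card_antidiagonal, nsmul_eq_mul, mul_one_div, Nat.cast_succ]

theorem sum_compatible_weight_le {s t : ℕ} (hst : s + t = M) (z : ℝ) :
    (∑ p : Label × Label, if Compatible p.1 p.2 then
      classFun s t (2 * n) p.1 / (2 * (n + M) : ℕ) * classFun z z 1 p.1 *
        (classFun s t (2 * n) p.2 / (2 * (n + M) : ℕ) * classFun z z 1 p.2) else 0) ≤
      compatibleWeight n M z := by
  set x : ℝ := z * s / (2 * (n + M)) with hx
  set y : ℝ := z * t / (2 * (n + M)) with hy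
  set w : ℝ := n / (n + M) with hw
  have hweight (a : Label) : (classFun s t (2 * n) a / (2 * (n + M) : ℕ) * classFun z z 1 a : ℝ) =
      classFun x y w a := by
    rcases a with _ | p
    · simp only [classFun, Option.elim, hw]
      push_cast
      rw [mul_one, mul_div_mul_left _ _ two_ne_zero]
    · simp only [classFun, Option.elim, hx, hy]
      split_ifs <;> push_cast <;> ring
  have hxy : z * M / (2 * (n + M)) = x + y := by
    rw [hx, hy, ← add_div, ← mul_add, ← hst, Nat.cast_add]
  have hwxy : (z * M + n) / (n + M) = w + 2 * (x + y) := by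
    rw [← hxy, hw]
    field_simp
    ring
  simp_rw [hweight]
  rw [sum_compatible_classFun, compatibleWeight, hxy, hwxy]
  linarith [sq_nonneg (x - y)]

theorem card_relatedPerms_compatible_le {ι : Type*} [Fintype ι] [DecidableEq ι]
    (hι : Fintype.card ι = n + M) (hz : 0 < z) {ℓ : ι ⊕ ι → Label}
    (hℓ : ℓ ∈ balancedLabellings (ι ⊕ ι) n M) :
    (#(relatedPerms Compatible ℓ) : ℝ) ≤ (exp 1 * (2 * (n + M) + 1)) ^ 5 *
      compatibleWeight n M z ^ (n + M) / z ^ (2 * M) *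
        Fintype.card (Equiv.Perm (ι ⊕ ι)) := by
  obtain ⟨s, t, hst, hℓ⟩ := mem_balancedLabellings.1 hℓ
  have hclass := classFun_nonneg hz.le hz.le zero_le_one
  have hcard := card_relatedPerms_mul_prod_pow_le Compatible
    (show Fintype.card (ι ⊕ ι) = 2 * (n + M) by rw [Fintype.card_sum, hι, two_mul]) hℓ hclass
  rw [prod_classFun_pow, one_pow, mul_one, ← pow_add, ← mul_add, hst, hι,
    show Fintype.card Label = 5 from rfl] at hcard
  have hpow := pow_le_pow_left₀ (sum_nonneg fun p _ => ?_)
    (sum_compatible_weight_le (n := n) hst z) (n + M)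
  · rw [div_mul_eq_mul_div, le_div_iff₀ (by positivity)]
    push_cast at hcard hpow
    refine hcard.trans ((mul_le_mul_of_nonneg_left hpow (by positivity)).trans_eq ?_)
    ring
  · split_ifs
    · exact mul_nonneg (mul_nonneg (by positivity) (hclass _))
        (mul_nonneg (by positivity) (hclass _))
    · exact le_rfl

theorem exists_forall_balancedLabellings_not_compatible (hn : 0 < n) (hM : 0 < M) (hz : 0 < z)
    (hlt : (exp 1 * (2 * (n + M) + 1)) ^ (5 * d + 1) * failureRate d n M z < 1) :
    ∃ τ : Fin d → Equiv.Perm (Fin (n + M) ⊕ Fin (n + M)),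
      ∀ ℓ ∈ balancedLabellings (Fin (n + M) ⊕ Fin (n + M)) n M,
        ∃ i j, ¬ Compatible (ℓ (τ i (.inl j))) (ℓ (τ i (.inr j))) := by
  let V := Fin (n + M) ⊕ Fin (n + M)
  suffices h : ∑ ℓ ∈ balancedLabellings V n M, #(relatedPerms Compatible ℓ) ^ d <
      Fintype.card (Equiv.Perm V) ^ d by
    simpa [relatedPerms] using exists_forall_exists_notMem h
  set E := exp 1 * (2 * (n + M : ℝ) + 1)
  have hME : (M + 1 : ℝ) ≤ E := by
    refine (?_ : (M + 1 : ℝ) ≤ 2 * (n + M) + 1).trans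
      (le_mul_of_one_le_left (by positivity) (one_le_exp zero_le_one))
    linarith [n.cast_nonneg (α := ℝ), M.cast_nonneg (α := ℝ)]
  have hweight := compatibleWeight_nonneg n M hz.le
  have hrate := failureRate_nonneg d n M hz.le
  rw [← Nat.cast_lt (α := ℝ)]
  push_cast
  calc ∑ ℓ ∈ balancedLabellings V n M, (#(relatedPerms Compatible ℓ) : ℝ) ^ d
      ≤ #(balancedLabellings V n M) * (E ^ 5 * compatibleWeight n M z ^ (n + M) / z ^ (2 * M) *
          Fintype.card (Equiv.Perm V)) ^ d := by
        rw [← nsmul_eq_mul]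
        refine sum_le_card_nsmul _ _ _ fun ℓ hℓ => ?_
        gcongr
        exact card_relatedPerms_compatible_le (Fintype.card_fin _) hz hℓ
    _ ≤ (M + 1) / ((M / (4 * (n + M))) ^ (2 * M) * (n / (n + M)) ^ (2 * n)) *
          (E ^ 5 * compatibleWeight n M z ^ (n + M) / z ^ (2 * M) *
            Fintype.card (Equiv.Perm V)) ^ d := by
        gcongr
        exact card_balancedLabellings_le V hn hM
    _ = (M + 1) * E ^ (5 * d) * failureRate d n M z * Fintype.card (Equiv.Perm V) ^ d := by
        rw [failureRate]
        generalize (n / (n + M) : ℝ) ^ (2 * n) = q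
        simp only [mul_pow, div_pow, ← pow_mul, mul_comm _ d]
        ring
    _ ≤ E ^ (5 * d + 1) * failureRate d n M z * Fintype.card (Equiv.Perm V) ^ d := by
        rw [pow_succ']
        gcongr
    _ < Fintype.card (Equiv.Perm V) ^ d := mul_lt_of_lt_one_left (by positivity) hlt

end Estimates

section Construction

open Filter Topology

/-- The union of the images of the perfect matching `{inl i, inr i}` under the permutations `τ`. -/
def matchingGraph {ι : Type*} {d : ℕ} (τ : Fin d → Equiv.Perm (ι ⊕ ι)) : SimpleGraph (ι ⊕ ι) :=
  fromEdgeSet (Set.range fun p : Fin d × ι => s(τ p.1 (.inl p.2), τ p.1 (.inr p.2)))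

variable {ι : Type*} {d : ℕ} (τ : Fin d → Equiv.Perm (ι ⊕ ι))

theorem ncard_edgeSet_matchingGraph_le [Finite ι] :
    (matchingGraph τ).edgeSet.ncard ≤ d * Nat.card ι := by
  rw [matchingGraph, edgeSet_fromEdgeSet]
  refine (Set.ncard_le_ncard Set.sdiff_subset (Set.finite_range _)).trans ?_
  rw [← Set.image_univ]
  refine (Set.ncard_image_le Set.finite_univ).trans_eq ?_
  rw [Set.ncard_univ, Nat.card_prod, Nat.card_fin]

theorem matchingGraph_adj (i : Fin d) (j : ι) :
    (matchingGraph τ).Adj (τ i (.inl j)) (τ i (.inr j)) := by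
  rw [matchingGraph, fromEdgeSet_adj]
  exact ⟨⟨(i, j), rfl⟩, (τ i).injective.ne Sum.inl_ne_inr⟩

theorem arrows_matchingGraph [Fintype ι] [DecidableEq ι] {n M : ℕ} (hι : Fintype.card ι = n + M)
    (hτ : ∀ ℓ ∈ balancedLabellings (ι ⊕ ι) n M,
      ∃ i j, ¬ Compatible (ℓ (τ i (.inl j))) (ℓ (τ i (.inr j)))) :
    Arrows (matchingGraph τ) (pathGraph n) 2 := by
  rw [arrows_iff_isContained_colourClass]
  intro c
  by_contra hfree
  rw [not_exists] at hfree
  have hV : Fintype.card (ι ⊕ ι) = 2 * (n + M) := by rw [Fintype.card_sum, hι, two_mul]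
  obtain ⟨ℓ, hℓ, hcompat⟩ := exists_compatible_mem_balancedLabellings hV (hfree 0) (hfree 1)
  obtain ⟨i, j, hij⟩ := hτ ℓ hℓ
  have hadj := matchingGraph_adj τ i j
  exact hij (hcompat _ _ ((Fin.exists_fin_two.1 ⟨_, rfl⟩).imp (⟨hadj, ·⟩) (⟨hadj, ·⟩)))

theorem eventually_pow_mul_failureRate_lt_one {a c : ℕ} {z : ℝ} (hz : 0 ≤ z)
    (hrate : failureRate d a c z < 1) (e : ℕ) : ∀ᶠ k : ℕ in atTop,
      (Real.exp 1 * (2 * ((a * k : ℕ) + (c * k : ℕ)) + 1)) ^ e *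
        failureRate d (a * k) (c * k) z < 1 := by
  have hlim : Tendsto (fun k : ℕ => (Real.exp 1 * (2 * (a + c) + 1)) ^ e *
      (k ^ e * failureRate d a c z ^ k)) atTop (𝓝 0) := by
    simpa only [mul_zero] using (tendsto_pow_const_mul_const_pow_of_lt_one e
      (failureRate_nonneg d a c hz) hrate).const_mul _
  filter_upwards [hlim.eventually_lt_const one_pos, eventually_ge_atTop 1] with k hlt hk
  refine lt_of_le_of_lt ?_ hlt
  have hk' : (1 : ℝ) ≤ k := by exact_mod_cast hk
  have hnonneg := failureRate_nonneg d a c hz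
  rw [failureRate_mul d a c z (by omega), ← mul_assoc, ← mul_pow, mul_assoc]
  gcongr
  push_cast
  linarith

theorem eventually_sizeRamsey_pathGraph_le {a c : ℕ} (ha : 0 < a) (hc : 0 < c) {z : ℝ}
    (hz : 0 < z) (hrate : failureRate d a c z < 1) :
    ∀ᶠ k in atTop, ∀ n ≤ a * k, sizeRamsey (pathGraph n) 2 ≤ d * ((a + c) * k) := by
  filter_upwards [eventually_pow_mul_failureRate_lt_one hz.le hrate (5 * d + 1),
    eventually_gt_atTop 0] with k hlt hk n hn
  obtain ⟨τ, hτ⟩ := exists_forall_balancedLabellings_not_compatible (Nat.mul_pos ha hk)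
    (Nat.mul_pos hc hk) hz hlt
  have harrows : Arrows (matchingGraph τ) (pathGraph n) 2 :=
    arrows_of_isContained (isContained_pathGraph_of_le hn)
      (arrows_matchingGraph τ (Fintype.card_fin _) hτ)
  calc sizeRamsey (pathGraph n) 2 ≤ (matchingGraph τ).edgeSet.ncard :=
        sizeRamsey_le_ncard_edgeSet harrows
    _ ≤ d * Nat.card (Fin (a * k + c * k)) := ncard_edgeSet_matchingGraph_le τ
    _ = d * ((a + c) * k) := by rw [Nat.card_fin, add_mul]

-- The ratio `104 : 181` of `n` to `M` and the weight `6 / 5` were found numerically, so as to make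
-- the number `27 * (104 + 181) / 104 ≈ 73.99` of edges per path vertex smaller than `74`.
set_option exponentiation.threshold 8000 in
theorem failureRate_27_104_181_lt_one : failureRate 27 104 181 (6 / 5) < 1 := by
  rw [failureRate, compatibleWeight, div_lt_one (by positivity)]
  norm_num

end Construction

end SizeRamseyPath

open SizeRamseyPath

/-- For all sufficiently large `n`, `R̂(Pₙ, 2) ≤ 74 n`. -/
theorem sizeRamsey_path_two_upper :
    ∃ N : ℕ, ∀ n : ℕ, N ≤ n → sizeRamsey (pathGraph n) 2 ≤ 74 * n := by
  obtain ⟨k₀, hk₀⟩ := Filter.eventually_atTop.1 (eventually_sizeRamsey_pathGraph_le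
    (by norm_num) (by norm_num) (by norm_num) failureRate_27_104_181_lt_one)
  -- `27 * 285 * (q + 1) ≤ 74 * 104 * q` holds for the quotient `q = n / 104` once `q ≥ 7695`.
  refine ⟨104 * (k₀ + 7695), fun n hn => ?_⟩
  have hle := hk₀ (n / 104 + 1) (by omega) n (by omega)
  omega
end
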